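/- arXiv:math/0503251 — 3 statements merged into one kernel-verified Lean document; each statement's English description precedes it below -/
import Mathlib

section
/- Let d ≥ 1, D ≥ 1, and let (A_n)_{n≥1} be rotor-router aggregation in ℤ^d built from any configuration of rotor stacks with discrepancy at most D. Suppose α ≥ 1, β ≥ 1 + 2/d, and c > 0 are such that ψ(A_n) ≤ c D^α n^β for all n ≥ 1. Then there is a constant c' depending only on d, c, α, β (not on D, n, or the rotor configuration) such that ψ(A_n) ≤ c' (D^{1 + α/2} n^{(1+β)/2} + n^{1 + 2/d}) for all n ≥ 1. -/
open scoped BigOperators Pointwise symmDiff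
open MeasureTheory Filter

noncomputable section
open scoped Classical
namespace RotorRouterPaper

/-- Sites of the lattice `ℤ^d`. -/
abbrev Site (d : ℕ) := Fin d → ℤ

/-- The `i`-th standard basis vector of `ℤ^d`. -/
def unitVec (d : ℕ) (i : Fin d) : Site d := fun j => if j = i then 1 else 0

/-- Squared Euclidean norm of a lattice point. -/
def nsq {d : ℕ} (x : Site d) : ℝ := ∑ i, ((x i : ℝ)) ^ 2

/-- Euclidean norm of a lattice point. -/
def enorm {d : ℕ} (x : Site d) : ℝ := Real.sqrt (nsq x)

/-- Adjacency `x ∼ y`: Euclidean distance one. -/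
def Adj {d : ℕ} (x y : Site d) : Prop := nsq (x - y) = 1

/-- `ω_d`, the Lebesgue volume of the unit ball in `ℝ^d`. -/
def ballVol (d : ℕ) : ℝ := (volume (Metric.ball (0 : EuclideanSpace ℝ (Fin d)) 1)).toReal

/-- The lattice ball `B_n = {y ∈ ℤ^d : ω_d ‖y‖^d < n}`. -/
def lball (d n : ℕ) : Set (Site d) := {y | ballVol d * enorm y ^ d < (n : ℝ)}

/-- Characterization of the expected exit time function of a (finite) region `A ⊆ ℤ^d`:
it vanishes off `A` and its discrete Laplacian is `-1` on `A`. -/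
def IsExitFun (d : ℕ) (A : Set (Site d)) (e : Site d → ℝ) : Prop :=
  (∀ x, x ∉ A → e x = 0) ∧
  ∀ x ∈ A, (1 / (2 * (d : ℝ))) * (∑ i, (e (x + unitVec d i) + e (x - unitVec d i))) - e x = -1

/-- The expected exit time function `x ↦ e_x(A)` (the unique function satisfying
`IsExitFun` when `A` is finite). -/
def exitFun (d : ℕ) (A : Set (Site d)) : Site d → ℝ :=
  if h : ∃ e, IsExitFun d A e then h.choose else 0

/-- `ē(A) = sup_x e_x(A)`. -/
def ebar (d : ℕ) (A : Set (Site d)) : ℝ := sSup (Set.range (exitFun d A))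

/-- `φ(n) = sup {ē(A) - e_o(B_n) : A ⊆ ℤ^d, |A| = n}`. -/
def phi (d n : ℕ) : ℝ :=
  sSup {t | ∃ A : Set (Site d), A.Finite ∧ A.ncard = n ∧ t = ebar d A - exitFun d (lball d n) 0}

/-- `Φ(n) = ∑_{j=1}^n φ(j)`. -/
def PhiSum (d n : ℕ) : ℝ := ∑ j ∈ Finset.Icc 1 n, phi d j

/-- `ψ(A) = ∑_{x ∈ A} ‖x‖²`. -/
def psi {d : ℕ} (A : Set (Site d)) : ℝ := ∑ᶠ x ∈ A, nsq x

/-- A cardinal direction in `ℤ^d`: one of `±e_1, …, ±e_d`. -/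
abbrev Dir (d : ℕ) := Fin d × Bool

/-- The lattice step vector of a cardinal direction. -/
def dirVec (d : ℕ) (ε : Dir d) : Site d := if ε.2 then unitVec d ε.1 else -unitVec d ε.1

/-- A configuration of rotor stacks `r` (with `r x i` the direction used for the
`(i+1)`-st visit to `x`) has discrepancy at most `D` if for every site, direction and `m ≥ 1`,
among the first `m` rotors of the stack each direction occurs `m/(2d)` times up to error `D`. -/
def HasDiscrepancy (d : ℕ) (D : ℝ) (r : Site d → ℕ → Dir d) : Prop :=
  ∀ (x : Site d) (ε : Dir d) (m : ℕ), 1 ≤ m →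
    |(({i | i < m ∧ r x i = ε} : Set ℕ).ncard : ℝ) - (m : ℝ) / (2 * (d : ℝ))| ≤ D

/-- One step of rotor-router walk on a state (current position, visit counts so far):
the particle at `p` being visited for the `(c p + 1)`-st time moves in direction
`r p (c p)` and the visit count at `p` increases by one. -/
def rstep {d : ℕ} (r : Site d → ℕ → Dir d) (s : Site d × (Site d → ℕ)) :
    Site d × (Site d → ℕ) :=
  (s.1 + dirVec d (r s.1 (s.2 s.1)), Function.update s.2 s.1 (s.2 s.1 + 1))

/-- The state after `t` steps of rotor-router walk started at the origin with visit counts `c`. -/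
def walkState {d : ℕ} (r : Site d → ℕ → Dir d) (c : Site d → ℕ) (t : ℕ) :
    Site d × (Site d → ℕ) :=
  (rstep r)^[t] (0, c)

/-- The number of steps until the rotor-router walk started at the origin
(with carried-over visit counts `c`) first leaves the region `A`. -/
def exitSteps {d : ℕ} (r : Site d → ℕ → Dir d) (A : Set (Site d)) (c : Site d → ℕ) : ℕ :=
  sInf {t | (walkState r c t).1 ∉ A}

/-- The state of rotor-router aggregation after `n` particles have walked and settled:
`(aggState r n).1` is the occupied region `A_{n+1}`, `(aggState r n).2.1` the accumulated
visit counts, and `(aggState r n).2.2` the total number `T_n` of steps taken so far. -/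
def aggState {d : ℕ} (r : Site d → ℕ → Dir d) : ℕ → Set (Site d) × (Site d → ℕ) × ℕ
  | 0 => ({0}, fun _ => 0, 0)
  | n + 1 =>
      let s := aggState r n
      let τ := exitSteps r s.1 s.2.1
      (insert (walkState r s.2.1 τ).1 s.1, (walkState r s.2.1 τ).2, s.2.2 + τ)

/-- The region `A_n` of rotor-router aggregation (for `n ≥ 1`). -/
def aggRegion {d : ℕ} (r : Site d → ℕ → Dir d) (n : ℕ) : Set (Site d) :=
  (aggState r (n - 1)).1

/-- `T_n`, the total number of steps taken by the first `n` particles. -/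
def totalSteps {d : ℕ} (r : Site d → ℕ → Dir d) (n : ℕ) : ℕ := (aggState r n).2.2

/-- `A^□ = A + [-1/2,1/2]^d ⊆ ℝ^d`. -/
def box (d : ℕ) (A : Set (Site d)) : Set (EuclideanSpace ℝ (Fin d)) :=
  {z | ∃ x ∈ A, ∀ i, |z i - (x i : ℝ)| ≤ 1 / 2}

/-- The closed Euclidean ball of unit volume centered at the origin of `ℝ^d`. -/
def unitVolBall (d : ℕ) : Set (EuclideanSpace ℝ (Fin d)) :=
  Metric.closedBall 0 (ballVol d ^ (-(1 : ℝ) / (d : ℝ)))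

/-- `A ⊆ ℤ^d` is orthoconvex if every line parallel to a coordinate axis meets `A`
in an interval. -/
def Orthoconvex (d : ℕ) (A : Set (Site d)) : Prop :=
  ∀ x ∈ A, ∀ i : Fin d, ∀ k : ℤ, 0 < k → x + k • unitVec d i ∈ A →
    ∀ j : ℤ, 0 < j → j < k → x + j • unitVec d i ∈ A

/-- The nonnegative orthant `Q ⊆ ℤ^d`. -/
def orthant (d : ℕ) : Set (Site d) := {x | ∀ i, 0 ≤ x i}

/-- The cube `C(o,r) = {x : ‖x‖_∞ ≤ r}`. -/
def cubeSet (d : ℕ) (r : ℕ) : Set (Site d) := {x | ∀ i, |x i| ≤ (r : ℤ)}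

/-- The boundary `∂C(o,r) = {x : ‖x‖_∞ = r + 1 and x ∼ y for some y ∈ C(o,r)}`. -/
def cubeBdry (d : ℕ) (r : ℕ) : Set (Site d) :=
  {x | (∀ i, |x i| ≤ (r : ℤ) + 1) ∧ (∃ i, |x i| = (r : ℤ) + 1) ∧ ∃ y ∈ cubeSet d r, Adj x y}

/-- Characterization of `h_r(x) = P_x(T_Q > T_{∂C(o,r)})`: it vanishes on
`Q ∩ (C(o,r) ∪ ∂C(o,r))`, equals `1` on `∂C(o,r) ∖ Q`, is discrete harmonic on
`C(o,r) ∖ Q`, and (as a normalization) vanishes off `C(o,r) ∪ ∂C(o,r)`. -/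
def IsOrthHarm (d : ℕ) (r : ℕ) (h : Site d → ℝ) : Prop :=
  (∀ x, x ∉ cubeSet d r ∪ cubeBdry d r → h x = 0) ∧
  (∀ x ∈ orthant d ∩ (cubeSet d r ∪ cubeBdry d r), h x = 0) ∧
  (∀ x ∈ cubeBdry d r \ orthant d, h x = 1) ∧
  (∀ x ∈ cubeSet d r \ orthant d,
    h x = (1 / (2 * (d : ℝ))) * ∑ i, (h (x + unitVec d i) + h (x - unitVec d i)))

/-- The function `h_r` of the previous characterization. -/
def orthHarm (d : ℕ) (r : ℕ) : Site d → ℝ :=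
  if h : ∃ f, IsOrthHarm d r f then h.choose else 0

/-- `p(k,r) = sup {h_r(x) : ‖x‖_∞ ≤ k}`. -/
def pkr (d k r : ℕ) : ℝ :=
  sSup {t | ∃ x : Site d, (∀ i, |x i| ≤ (k : ℤ)) ∧ t = orthHarm d r x}

/-- The exponent `γ_d` of Theorem 3.1. -/
def gam (d : ℕ) : ℝ :=
  if d = 1 then 1 else if d = 2 then 1 / 3
  else (2 : ℝ) ^ (-(d : ℝ)) / (2 * (d : ℝ) ^ 2 * Real.log 3)

/-!
Summing the increments of a function `f` along all moves of the rotor-router walks telescopes to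
`∑ (f (stopping site) - f o)`. Regrouping the same sum by sites, the discrepancy hypothesis turns it
into `∑ u(x) Δf(x)`, where `u` is the odometer and `Δ` the discrete Laplacian, up to an error of
`D ∑ |∇f|`, which Cauchy-Schwarz controls by `D` times the square root of the Dirichlet energy of
`f` on the aggregate. Two choices of `f` are made.

* For `f = ‖·‖²` the Laplacian is `1` and the energy is of order `ψ(A_n) + n`, so `ψ(A_n)` exceeds
  the total number of visits by at most `O(D √(n ψ(A_n)) + D n)`.
* For `f` the expected time spent in `A_n` by simple random walk up to time `T` of order `n^(2/d)`,
  the heat kernel bound `p_T ≤ (d/(T+1))^(d/2)` makes `f` strictly superharmonic on `A_n`, while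
  `f ≤ T`. This bounds the total number of visits by `O(n^(1+2/d) + D n^(1+1/d))`.

Together they give `ψ(A_n) ≤ C (D √(n ψ(A_n)) + D n^(1+1/d) + n^(1+2/d))`, into which an a priori
bound on `ψ(A_n)` can be substituted.
-/

/-! ### Binomial and multinomial estimates -/

lemma sq_centralBinom_mul_le (m : ℕ) : m.centralBinom ^ 2 * (2 * m + 1) ≤ 16 ^ m := by
  induction m with
  | zero => simp
  | succ m ih =>
    refine Nat.le_of_mul_le_mul_left (c := (m + 1) ^ 2) ?_ (by positivity)
    calc (m + 1) ^ 2 * ((m + 1).centralBinom ^ 2 * (2 * (m + 1) + 1))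
        = ((m + 1) * (m + 1).centralBinom) ^ 2 * (2 * (m + 1) + 1) := by ring
      _ = (m.centralBinom ^ 2 * (2 * m + 1)) * (4 * ((2 * m + 1) * (2 * m + 3))) := by
          rw [Nat.succ_mul_centralBinom_succ]; ring
      _ ≤ 16 ^ m * (4 * (4 * (m + 1) ^ 2)) := Nat.mul_le_mul ih (by nlinarith)
      _ = (m + 1) ^ 2 * 16 ^ (m + 1) := by ring

lemma sq_choose_mul_succ_le (k j : ℕ) : k.choose j ^ 2 * (k + 1) ≤ 4 ^ k := by
  suffices h : k.choose (k / 2) ^ 2 * (k + 1) ≤ 4 ^ k from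
    (Nat.mul_le_mul_right _ (Nat.pow_le_pow_left (Nat.choose_le_middle j k) 2)).trans h
  obtain ⟨m, rfl | rfl⟩ := Nat.even_or_odd' k
  · simpa [Nat.centralBinom, pow_mul] using sq_centralBinom_mul_le m
  · have hmiddle : (m + 1).centralBinom = 2 * (2 * m + 1).choose m := by
      rw [Nat.centralBinom, mul_add_one, Nat.choose_succ_succ, ← Nat.choose_symm_half m]
      ring
    have hcentral := sq_centralBinom_mul_le (m + 1)
    have hpow : 16 ^ (m + 1) = 4 * 4 ^ (2 * m + 1) := by
      rw [pow_succ 4, pow_mul]; ring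
    rw [hmiddle, hpow] at hcentral
    rw [show (2 * m + 1) / 2 = m by omega]
    nlinarith [Nat.zero_le ((2 * m + 1).choose m ^ 2)]

lemma choose_div_two_pow_le (k j : ℕ) : (k.choose j : ℝ) / 2 ^ k ≤ (√(k + 1))⁻¹ := by
  have hsq : (k.choose j : ℝ) ^ 2 * (k + 1) ≤ 4 ^ k := mod_cast sq_choose_mul_succ_le k j
  rw [← one_div, div_le_div_iff₀ (by positivity) (by positivity), one_mul]
  refine abs_le_of_sq_le_sq' ?_ (by positivity) |>.2
  rwa [mul_pow, Real.sq_sqrt (by positivity), ← pow_mul, mul_comm k, pow_mul,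
    show (2 : ℝ) ^ 2 = 4 by norm_num]

lemma multinomial_mul_pow_card_le {ι : Type*} [Fintype ι] (k : ι → ℕ) :
    Nat.multinomial Finset.univ k * (∑ i, k i + 1) ^ Fintype.card ι
      ≤ (∏ i, (k i + 1)) * Nat.multinomial Finset.univ (fun i => k i + 1) := by
  refine Nat.le_of_mul_le_mul_left (c := ∏ i, (k i).factorial) ?_
    (Finset.prod_pos fun i _ => Nat.factorial_pos _)
  calc (∏ i, (k i).factorial)
        * (Nat.multinomial Finset.univ k * (∑ i, k i + 1) ^ Fintype.card ι)
      = (∑ i, k i).factorial * (∑ i, k i + 1) ^ Fintype.card ι := by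
        rw [← mul_assoc, Nat.multinomial_spec]
    _ ≤ (∑ i, k i + Fintype.card ι).factorial := Nat.factorial_mul_pow_le_factorial
    _ = (∑ i, (k i + 1)).factorial := by simp [Finset.sum_add_distrib]
    _ = (∏ i, (k i + 1).factorial) * Nat.multinomial Finset.univ (fun i => k i + 1) :=
        (Nat.multinomial_spec _ _).symm
    _ = (∏ i, (k i).factorial)
        * ((∏ i, (k i + 1)) * Nat.multinomial Finset.univ (fun i => k i + 1)) := by
        simp only [Nat.factorial_succ, Finset.prod_mul_distrib]; ring

section Multinomial

variable {ι : Type*} [Fintype ι] [DecidableEq ι]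

lemma sum_multinomial_eq_card_pow (t : ℕ) :
    ∑ k ∈ (Finset.univ : Finset ι).piAntidiag t, (Nat.multinomial Finset.univ k : ℝ)
      = (Fintype.card ι : ℝ) ^ t := by
  simpa using (Finset.sum_pow_eq_sum_piAntidiag Finset.univ (fun _ : ι => (1 : ℝ)) t).symm

lemma sum_multinomial_succ_le (t : ℕ) :
    ∑ k ∈ (Finset.univ : Finset ι).piAntidiag t,
      (Nat.multinomial Finset.univ (fun i : ι => k i + 1) : ℝ)
        ≤ (Fintype.card ι : ℝ) ^ (t + Fintype.card ι) := by
  have hinj : Function.Injective fun (k : ι → ℕ) i => k i + 1 := fun k l hkl =>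
    funext fun i => Nat.succ_injective (congrFun hkl i)
  rw [← sum_multinomial_eq_card_pow,
    ← Finset.sum_image (f := fun k => (Nat.multinomial Finset.univ k : ℝ)) hinj.injOn]
  refine Finset.sum_le_sum_of_subset_of_nonneg ?_ fun _ _ _ => by positivity
  intro k hk
  obtain ⟨l, hl, rfl⟩ := Finset.mem_image.mp hk
  have hsum : ∑ i, l i = t := by simpa using hl
  simp [Finset.sum_add_distrib, hsum]

lemma sum_multinomial_mul_prod_inv_succ_le (t : ℕ) :
    ∑ k ∈ (Finset.univ : Finset ι).piAntidiag t,
      (Nat.multinomial Finset.univ k : ℝ) * ∏ i : ι, ((k i : ℝ) + 1)⁻¹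
        ≤ (Fintype.card ι : ℝ) ^ (t + Fintype.card ι) / ((t : ℝ) + 1) ^ Fintype.card ι := by
  refine le_trans ?_ (div_le_div_of_nonneg_right (sum_multinomial_succ_le t) (by positivity))
  rw [Finset.sum_div]
  refine Finset.sum_le_sum fun k hk => ?_
  have hsum : ∑ i, k i = t := by simpa using hk
  have hmul : (Nat.multinomial Finset.univ k : ℝ) * ((t : ℝ) + 1) ^ Fintype.card ι
      ≤ (∏ i, ((k i : ℝ) + 1)) * Nat.multinomial Finset.univ (fun i => k i + 1) := by
    have := multinomial_mul_pow_card_le k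
    rw [hsum] at this
    exact_mod_cast this
  have hprod : (0 : ℝ) < ∏ i, ((k i : ℝ) + 1) := Finset.prod_pos fun i _ => by positivity
  rw [Finset.prod_inv_distrib, ← div_eq_mul_inv, div_le_div_iff₀ hprod (by positivity)]
  linarith

lemma sum_multinomial_mul_prod_inv_sqrt_le (t : ℕ) :
    ∑ k ∈ (Finset.univ : Finset ι).piAntidiag t,
      (Nat.multinomial Finset.univ k : ℝ) * ∏ i : ι, (√(k i + 1))⁻¹
        ≤ (Fintype.card ι : ℝ) ^ t
          * √(((Fintype.card ι : ℝ) / ((t : ℝ) + 1)) ^ Fintype.card ι) := by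
  set q := Fintype.card ι
  have hcauchySchwarz : (∑ k ∈ (Finset.univ : Finset ι).piAntidiag t,
      (Nat.multinomial Finset.univ k : ℝ) * ∏ i : ι, (√(k i + 1))⁻¹) ^ 2
      ≤ (∑ k ∈ (Finset.univ : Finset ι).piAntidiag t, (Nat.multinomial Finset.univ k : ℝ))
        * ∑ k ∈ (Finset.univ : Finset ι).piAntidiag t,
          (Nat.multinomial Finset.univ k : ℝ) * ∏ i : ι, ((k i : ℝ) + 1)⁻¹ := by
    refine Finset.sum_sq_le_sum_mul_sum_of_sq_le_mul _ (fun _ _ => by positivity)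
      (fun k _ => mul_nonneg (by positivity) (Finset.prod_nonneg fun i _ => by positivity))
      fun k _ => le_of_eq ?_
    have hsq (i : ι) : (√((k i : ℝ) + 1))⁻¹ ^ 2 = ((k i : ℝ) + 1)⁻¹ := by
      rw [inv_pow, Real.sq_sqrt (by positivity)]
    simp only [mul_pow, ← Finset.prod_pow, hsq]
    ring
  refine abs_le_of_sq_le_sq' (hcauchySchwarz.trans ?_) (by positivity) |>.2
  rw [sum_multinomial_eq_card_pow]
  calc (q : ℝ) ^ t * ∑ k ∈ (Finset.univ : Finset ι).piAntidiag t,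
        (Nat.multinomial Finset.univ k : ℝ) * ∏ i : ι, ((k i : ℝ) + 1)⁻¹
      ≤ (q : ℝ) ^ t * ((q : ℝ) ^ (t + q) / ((t : ℝ) + 1) ^ q) := by
        gcongr; exact sum_multinomial_mul_prod_inv_succ_le t
    _ = ((q : ℝ) ^ t * √(((q : ℝ) / ((t : ℝ) + 1)) ^ q)) ^ 2 := by
        rw [mul_pow, Real.sq_sqrt (by positivity), div_pow]; ring

end Multinomial

/-! ### Heat kernel of simple random walk -/

section HeatKernel

lemma coeff_sum_single_le {ι G : Type*} {s : Finset ι} {v : ι → G} {w : ι → ℝ} {M : ℝ}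
    (hv : Set.InjOn v s) (hw : ∀ j ∈ s, w j ≤ M) (hM : 0 ≤ M) (x : G) :
    (∑ j ∈ s, AddMonoidAlgebra.single (v j) (w j)).coeff x ≤ M := by
  simp only [AddMonoidAlgebra.coeff_sum, AddMonoidAlgebra.coeff_single, Finsupp.finsetSum_apply,
    Finsupp.single_apply]
  by_cases hx : ∃ j ∈ s, v j = x
  · obtain ⟨j, hj, rfl⟩ := hx
    rw [Finset.sum_eq_single_of_mem j hj fun l hl hlj => if_neg fun h => hlj (hv hl hj h),
      if_pos rfl]
    exact hw j hj
  · push Not at hx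
    rwa [Finset.sum_eq_zero fun j hj => if_neg (hx j hj)]

variable {d : ℕ}

/-- The step distribution of simple random walk along the `i`-th axis. Measures on `ℤ^d` are
elements of the group algebra `ℝ[ℤ^d]`, whose product is convolution. -/
def axisStep (i : Fin d) : AddMonoidAlgebra ℝ (Site d) :=
  .single (unitVec d i) (1 / 2) + .single (-unitVec d i) (1 / 2)

/-- The step distribution of simple random walk on `ℤ^d`; its `t`-th power is the `t`-step heat
kernel. -/
def stepDist (d : ℕ) : AddMonoidAlgebra ℝ (Site d) := (1 / (d : ℝ)) • ∑ i, axisStep i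

lemma axisStep_pow (i : Fin d) (k : ℕ) :
    axisStep i ^ k = ∑ j ∈ Finset.range (k + 1),
      .single ((2 * (j : ℤ) - k) • unitVec d i) ((k.choose j : ℝ) / 2 ^ k) := by
  rw [axisStep, add_pow]
  refine Finset.sum_congr rfl fun j hj => ?_
  have hjk : j ≤ k := Nat.lt_succ_iff.mp (Finset.mem_range.mp hj)
  rw [AddMonoidAlgebra.single_pow, AddMonoidAlgebra.single_pow, AddMonoidAlgebra.single_mul_single,
    ← nsmul_eq_mul', AddMonoidAlgebra.smul_single, ← pow_add, Nat.add_sub_cancel' hjk]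
  congr 1
  · rw [smul_neg, ← sub_eq_add_neg, ← natCast_zsmul, ← natCast_zsmul, ← sub_smul]
    push_cast [hjk]
    congr 1
    ring
  · rw [nsmul_eq_mul, one_div_pow, mul_one_div]

lemma sum_smul_unitVec (a : Fin d → ℤ) : ∑ i, a i • unitVec d i = a := by
  ext l
  simp [unitVec]

lemma coeff_prod_axisStep_pow_le (k : Fin d → ℕ) (x : Site d) :
    (∏ i, axisStep i ^ k i).coeff x ≤ ∏ i, (√(k i + 1))⁻¹ := by
  simp only [axisStep_pow]
  rw [Finset.prod_univ_sum]
  simp only [AddMonoidAlgebra.prod_single, sum_smul_unitVec]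
  refine coeff_sum_single_le (v := fun (j : Fin d → ℕ) i => 2 * (j i : ℤ) - k i)
    (w := fun j => ∏ i, ((k i).choose (j i) : ℝ) / 2 ^ k i) ?_ ?_ ?_ x
  · intro j _ l _ hjl
    ext i
    have := congrFun hjl i
    grind
  · exact fun j _ => Finset.prod_le_prod (fun i _ => by positivity)
      fun i _ => choose_div_two_pow_le _ _
  · exact Finset.prod_nonneg fun i _ => by positivity

-- Conditioning on the number of steps taken along each axis, the coordinates are independent
-- one-dimensional walks.
lemma coeff_stepDist_pow_le (hd : 1 ≤ d) (t : ℕ) (x : Site d) :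
    (stepDist d ^ t).coeff x ≤ √((d / ((t : ℝ) + 1)) ^ d) := by
  have hd0 : (d : ℝ) ≠ 0 := by positivity
  have hbinomial : ((∑ i : Fin d, axisStep i) ^ t).coeff x
      ≤ ∑ k ∈ Finset.univ.piAntidiag t,
        (Nat.multinomial Finset.univ k : ℝ) * ∏ i : Fin d, (√(k i + 1))⁻¹ := by
    rw [Finset.sum_pow_eq_sum_piAntidiag, AddMonoidAlgebra.coeff_sum, Finsupp.finsetSum_apply]
    refine Finset.sum_le_sum fun k _ => ?_
    rw [← nsmul_eq_mul, AddMonoidAlgebra.coeff_smul, Finsupp.smul_apply, nsmul_eq_mul]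
    gcongr
    exact coeff_prod_axisStep_pow_le k x
  have hsum := sum_multinomial_mul_prod_inv_sqrt_le (ι := Fin d) t
  rw [Fintype.card_fin] at hsum
  rw [stepDist, smul_pow, AddMonoidAlgebra.coeff_smul, Finsupp.smul_apply, smul_eq_mul]
  calc (1 / (d : ℝ)) ^ t * ((∑ i : Fin d, axisStep i) ^ t).coeff x
      ≤ (1 / (d : ℝ)) ^ t * ((d : ℝ) ^ t * √((d / ((t : ℝ) + 1)) ^ d)) := by
        gcongr; exact hbinomial.trans hsum
    _ = √((d / ((t : ℝ) + 1)) ^ d) := by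
        rw [← mul_assoc, ← mul_pow, one_div_mul_cancel hd0, one_pow, one_mul]

end HeatKernel

/-! ### Discrete calculus -/

section Calculus

variable {d : ℕ}

/-- The increment of `f` along the step from `x` in direction `ε`. -/
def grad (f : Site d → ℝ) (x : Site d) (ε : Dir d) : ℝ := f (x + dirVec d ε) - f x

/-- The discrete Laplacian, normalized as the generator of simple random walk. -/
def laplacian (f : Site d → ℝ) (x : Site d) : ℝ := (∑ ε, grad f x ε) / (2 * d)

/-- The Dirichlet energy of `f` over the edges leaving the sites of `B`; an edge with both
endpoints in `B` is counted twice. -/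
def energyOn (f : Site d → ℝ) (B : Finset (Site d)) : ℝ := ∑ x ∈ B, ∑ ε, grad f x ε ^ 2

lemma card_dir (d : ℕ) : Fintype.card (Dir d) = 2 * d := by
  simp [mul_comm]

lemma sum_dir (F : Dir d → ℝ) : ∑ ε, F ε = ∑ i, (F (i, true) + F (i, false)) := by
  simp [Fintype.sum_prod_type]

lemma two_mul_mul_laplacian (f : Site d → ℝ) (x : Site d) :
    2 * d * laplacian f x = ∑ ε, grad f x ε := by
  rcases Nat.eq_zero_or_pos d with rfl | hd
  · simp
  · exact mul_div_cancel₀ _ (by positivity)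

lemma sum_sq_grad (f : Site d → ℝ) (x : Site d) :
    ∑ ε, grad f x ε ^ 2
      = 2 * d * laplacian (fun y => f y ^ 2) x - 4 * d * (f x * laplacian f x) := by
  have hterm (ε : Dir d) :
      grad f x ε ^ 2 = grad (fun y => f y ^ 2) x ε - 2 * f x * grad f x ε := by
    simp only [grad]; ring
  rw [two_mul_mul_laplacian, Finset.sum_congr rfl fun ε _ => hterm ε, Finset.sum_sub_distrib,
    ← Finset.mul_sum, ← two_mul_mul_laplacian f]
  ring

lemma hasSum_laplacian {f : Site d → ℝ} (hf : Summable f) : HasSum (laplacian f) 0 := by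
  have hgrad (ε : Dir d) : HasSum (fun x => grad f x ε) 0 := by
    rw [← sub_self (∑' x, f x)]
    exact ((Equiv.addRight (dirVec d ε)).hasSum_iff.mpr hf.hasSum).sub hf.hasSum
  have hsum := (hasSum_sum fun ε (_ : ε ∈ Finset.univ) => hgrad ε).div_const (2 * d : ℝ)
  rwa [Finset.sum_const_zero, zero_div] at hsum

lemma energyOn_le_of_neg_laplacian_le {f : Site d → ℝ} {B : Finset (Site d)}
    (hf : Summable fun x => f x ^ 2) (hf0 : ∀ x, 0 ≤ f x)
    (hB : ∀ x, -laplacian f x ≤ (B : Set (Site d)).indicator 1 x) :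
    energyOn f B ≤ 4 * d * ∑ x ∈ B, f x := by
  set g : Site d → ℝ := fun x =>
    2 * d * laplacian (fun y => f y ^ 2) x + 4 * d * (B : Set (Site d)).indicator f x
  have hle (x : Site d) : ∑ ε, grad f x ε ^ 2 ≤ g x := by
    have hmul : f x * -laplacian f x ≤ (B : Set (Site d)).indicator f x := by
      simpa [Set.indicator_apply] using mul_le_mul_of_nonneg_left (hB x) (hf0 x)
    rw [sum_sq_grad]
    nlinarith [(Nat.cast_nonneg d : (0 : ℝ) ≤ d)]
  have hind : HasSum ((B : Set (Site d)).indicator f) (∑ x ∈ B, f x) :=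
    (hasSum_subtype_iff_indicator).mp (B.hasSum f)
  have hg : HasSum g (4 * d * ∑ x ∈ B, f x) := by
    simpa [g] using ((hasSum_laplacian hf).mul_left (2 * d : ℝ)).add (hind.mul_left (4 * d : ℝ))
  calc energyOn f B ≤ ∑ x ∈ B, g x := Finset.sum_le_sum fun x _ => hle x
    _ ≤ 4 * d * ∑ x ∈ B, f x :=
        sum_le_hasSum B (fun x _ => (Finset.sum_nonneg fun ε _ => sq_nonneg _).trans (hle x)) hg

lemma sum_abs_grad_le (f : Site d → ℝ) (B : Finset (Site d)) :
    ∑ x ∈ B, ∑ ε, |grad f x ε| ≤ √(2 * d * B.card * energyOn f B) := by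
  refine Real.le_sqrt_of_sq_le ?_
  rw [energyOn, ← Finset.sum_product', ← Finset.sum_product']
  refine sq_sum_le_card_mul_sum_sq.trans (le_of_eq ?_)
  simp only [sq_abs, Finset.card_product, Finset.card_univ, card_dir]
  push_cast
  ring

lemma nsq_zero : nsq (0 : Site d) = 0 := by
  simp [nsq]

lemma nsq_nonneg (x : Site d) : 0 ≤ nsq x :=
  Finset.sum_nonneg fun _ _ => sq_nonneg _

lemma grad_nsq (x : Site d) (ε : Dir d) :
    grad nsq x ε = 1 + 2 * (if ε.2 then (x ε.1 : ℝ) else -x ε.1) := by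
  obtain ⟨i, b⟩ := ε
  simp only [grad, nsq, ← Finset.sum_sub_distrib]
  rw [Finset.sum_eq_single i]
  · cases b <;> simp only [dirVec, unitVec, Bool.false_eq_true, ↓reduceIte, Pi.add_apply,
      Pi.neg_apply] <;> push_cast <;> ring
  · intro j _ hj
    cases b <;> simp [dirVec, unitVec, hj]
  · simp

lemma laplacian_nsq (hd : 1 ≤ d) (x : Site d) : laplacian nsq x = 1 := by
  have haxis (i : Fin d) : grad nsq x (i, true) + grad nsq x (i, false) = 2 := by
    simp only [grad_nsq, if_true, Bool.false_eq_true, if_false]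
    ring
  rw [laplacian, div_eq_one_iff_eq (by positivity), sum_dir]
  simp [haxis, mul_comm]

lemma energyOn_nsq (B : Finset (Site d)) :
    energyOn nsq B = 8 * ∑ x ∈ B, nsq x + 2 * d * B.card := by
  have hsite (x : Site d) : ∑ ε, grad nsq x ε ^ 2 = 8 * nsq x + 2 * d := by
    have haxis (i : Fin d) :
        grad nsq x (i, true) ^ 2 + grad nsq x (i, false) ^ 2 = 8 * (x i : ℝ) ^ 2 + 2 := by
      simp only [grad_nsq, if_true, Bool.false_eq_true, if_false]
      ring
    simp only [sum_dir, haxis, nsq, Finset.sum_add_distrib, ← Finset.mul_sum, Finset.sum_const,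
      Finset.card_univ, Fintype.card_fin, nsmul_eq_mul]
    ring
  simp only [energyOn, hsite, Finset.sum_add_distrib, ← Finset.mul_sum, Finset.sum_const,
    nsmul_eq_mul]
  ring

end Calculus

/-! ### A bounded superharmonic function on a finite set -/

section Potential

variable {d : ℕ}

/-- Counting measure on `B`, as an element of the group algebra. -/
def countingOn (B : Finset (Site d)) : AddMonoidAlgebra ℝ (Site d) := ∑ y ∈ B, .single y 1

/-- The expected number of visits to `B` by simple random walk before time `T`, as a function of
the starting point. -/
def potential (B : Finset (Site d)) (T : ℕ) : AddMonoidAlgebra ℝ (Site d) :=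
  ∑ t ∈ Finset.range T, stepDist d ^ t * countingOn B

lemma coeff_countingOn (B : Finset (Site d)) (x : Site d) :
    (countingOn B).coeff x = (B : Set (Site d)).indicator 1 x := by
  simp [countingOn, Finsupp.single_apply, Set.indicator_apply]

lemma coeff_stepDist_mul (h : AddMonoidAlgebra ℝ (Site d)) (x : Site d) :
    (stepDist d * h).coeff x = (∑ ε, h.coeff (x + dirVec d ε)) / (2 * d) := by
  simp only [stepDist, axisStep, smul_mul_assoc, Finset.sum_mul, add_mul,
    AddMonoidAlgebra.coeff_smul, AddMonoidAlgebra.coeff_sum, AddMonoidAlgebra.coeff_add,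
    Finsupp.smul_apply, Finsupp.finsetSum_apply, Finsupp.add_apply,
    AddMonoidAlgebra.coeff_single_mul_apply, neg_neg, smul_eq_mul]
  rw [sum_dir, Finset.mul_sum, Finset.sum_div]
  refine Finset.sum_congr rfl fun i _ => ?_
  simp only [dirVec, if_true, Bool.false_eq_true, if_false, add_comm x]
  ring

lemma coeff_stepDist_mul_eq_add_laplacian (hd : 1 ≤ d) (h : AddMonoidAlgebra ℝ (Site d))
    (x : Site d) : (stepDist d * h).coeff x = h.coeff x + laplacian h.coeff x := by
  have hd0 : (d : ℝ) ≠ 0 := by positivity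
  rw [coeff_stepDist_mul, laplacian]
  simp only [grad, Finset.sum_sub_distrib, Finset.sum_const, Finset.card_univ, card_dir,
    nsmul_eq_mul]
  push_cast
  field_simp
  ring

lemma coeff_stepDist_pow_mul_countingOn_mem_Icc (B : Finset (Site d)) (t : ℕ) (x : Site d) :
    (stepDist d ^ t * countingOn B).coeff x ∈ Set.Icc 0 1 := by
  induction t generalizing x with
  | zero =>
    rw [pow_zero, one_mul, coeff_countingOn, Set.indicator_apply]
    split_ifs <;> simp
  | succ t ih =>
    rw [pow_succ', mul_assoc, coeff_stepDist_mul]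
    refine ⟨div_nonneg (Finset.sum_nonneg fun ε _ => (ih _).1) (by positivity),
      div_le_one_of_le₀ ?_ (by positivity)⟩
    refine (Finset.sum_le_card_nsmul _ _ 1 fun ε _ => (ih _).2).trans (le_of_eq ?_)
    simp [mul_comm]

lemma coeff_stepDist_pow_mul_countingOn_le (hd : 1 ≤ d) (B : Finset (Site d)) (t : ℕ)
    (x : Site d) :
    (stepDist d ^ t * countingOn B).coeff x ≤ B.card * √((d / ((t : ℝ) + 1)) ^ d) := by
  rw [countingOn, Finset.mul_sum, AddMonoidAlgebra.coeff_sum, Finsupp.finsetSum_apply,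
    ← nsmul_eq_mul]
  refine Finset.sum_le_card_nsmul _ _ _ fun y _ => ?_
  rw [AddMonoidAlgebra.coeff_mul_single_apply, mul_one]
  exact coeff_stepDist_pow_le hd t _

lemma coeff_stepDist_pow_mul_countingOn_le_half (hd : 1 ≤ d) {B : Finset (Site d)} {n T : ℕ}
    (hn : 1 ≤ n) (hB : B.card ≤ n) (hT : 4 * d * (n : ℝ) ^ (2 / (d : ℝ)) ≤ T) (x : Site d) :
    (stepDist d ^ T * countingOn B).coeff x ≤ 1 / 2 := by
  set R : ℝ := (n : ℝ) ^ (2 / (d : ℝ))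
  have hRd : R ^ d = (n : ℝ) ^ 2 := by
    rw [← Real.rpow_natCast, ← Real.rpow_mul (by positivity), div_mul_cancel₀ _ (by positivity)]
    exact Real.rpow_natCast _ 2
  have hratio : d / ((T : ℝ) + 1) ≤ 1 / (4 * R) := by
    rw [div_le_div_iff₀ (by positivity) (by positivity)]
    linarith
  have hkernel : √((d / ((T : ℝ) + 1)) ^ d) ≤ 1 / (2 * n) := by
    rw [Real.sqrt_le_left (by positivity)]
    calc (d / ((T : ℝ) + 1)) ^ d ≤ (1 / (4 * R)) ^ d := by gcongr
      _ = 1 / (4 ^ d * (n : ℝ) ^ 2) := by rw [div_pow, mul_pow, hRd, one_pow]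
      _ ≤ 1 / (4 ^ 1 * (n : ℝ) ^ 2) := by gcongr; norm_num
      _ = (1 / (2 * n)) ^ 2 := by ring
  calc (stepDist d ^ T * countingOn B).coeff x ≤ B.card * √((d / ((T : ℝ) + 1)) ^ d) :=
        coeff_stepDist_pow_mul_countingOn_le hd B T x
    _ ≤ n * (1 / (2 * n)) := by gcongr
    _ = 1 / 2 := by field_simp

lemma coeff_potential_mem_Icc (B : Finset (Site d)) (T : ℕ) (x : Site d) :
    (potential B T).coeff x ∈ Set.Icc 0 (T : ℝ) := by
  have hterm (t : ℕ) := coeff_stepDist_pow_mul_countingOn_mem_Icc B t x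
  rw [potential, AddMonoidAlgebra.coeff_sum, Finsupp.finsetSum_apply]
  refine ⟨Finset.sum_nonneg fun t _ => (hterm t).1, ?_⟩
  simpa using Finset.sum_le_card_nsmul (Finset.range T) _ 1 fun t _ => (hterm t).2

lemma laplacian_potential (hd : 1 ≤ d) (B : Finset (Site d)) (T : ℕ) (x : Site d) :
    laplacian (potential B T).coeff x
      = (stepDist d ^ T * countingOn B).coeff x - (B : Set (Site d)).indicator 1 x := by
  have htelescope : stepDist d * potential B T + countingOn B
      = potential B T + stepDist d ^ T * countingOn B := by
    simp only [potential, Finset.mul_sum, ← mul_assoc, ← pow_succ']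
    rw [← Finset.sum_range_succ, Finset.sum_range_succ', pow_zero, one_mul]
  have := congrArg (fun h => h.coeff x) htelescope
  simp only [AddMonoidAlgebra.coeff_add, Finsupp.add_apply,
    coeff_stepDist_mul_eq_add_laplacian hd, coeff_countingOn] at this
  linarith

lemma energyOn_potential_le (hd : 1 ≤ d) (B : Finset (Site d)) (T : ℕ) :
    energyOn (potential B T).coeff B ≤ 4 * d * (B.card * T) := by
  have hsupport : (fun x => (potential B T).coeff x ^ 2).HasFiniteSupport :=
    (potential B T).coeff.hasFiniteSupport.subset fun x hx hx0 => hx (by simp [hx0])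
  calc energyOn (potential B T).coeff B
      ≤ 4 * d * ∑ x ∈ B, (potential B T).coeff x := by
        refine energyOn_le_of_neg_laplacian_le (summable_of_hasFiniteSupport hsupport)
          (fun x => (coeff_potential_mem_Icc B T x).1) fun x => ?_
        rw [laplacian_potential hd]
        linarith [(coeff_stepDist_pow_mul_countingOn_mem_Icc B T x).1]
    _ ≤ 4 * d * (B.card * T) := by
        gcongr
        simpa using Finset.sum_le_card_nsmul B _ _ fun x _ => (coeff_potential_mem_Icc B T x).2

lemma exists_superharmonic (hd : 1 ≤ d) {n : ℕ} (hn : 1 ≤ n) {B : Finset (Site d)}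
    (hB : B.card ≤ n) :
    ∃ f : Site d → ℝ, (∀ x, f x ∈ Set.Icc 0 (5 * d * (n : ℝ) ^ (2 / (d : ℝ)))) ∧
      (∀ x ∈ B, laplacian f x ≤ -(1 / 2)) ∧
      energyOn f B ≤ 20 * d ^ 2 * (n : ℝ) ^ (1 + 2 / (d : ℝ)) := by
  set R : ℝ := (n : ℝ) ^ (2 / (d : ℝ))
  have hR : 1 ≤ R := Real.one_le_rpow (mod_cast hn) (by positivity)
  have hd1 : (1 : ℝ) ≤ d := mod_cast hd
  set T := ⌈4 * d * R⌉₊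
  have hT : (T : ℝ) ≤ 5 * d * R := by
    have := Nat.ceil_lt_add_one (show 0 ≤ 4 * d * R by positivity)
    nlinarith
  refine ⟨(potential B T).coeff, fun x => ?_, fun x hx => ?_, ?_⟩
  · exact Set.Icc_subset_Icc_right hT (coeff_potential_mem_Icc B T x)
  · rw [laplacian_potential hd, Set.indicator_of_mem (Finset.mem_coe.mpr hx), Pi.one_apply]
    linarith [coeff_stepDist_pow_mul_countingOn_le_half hd hn hB (Nat.le_ceil _) x]
  · calc energyOn (potential B T).coeff B ≤ 4 * d * (B.card * T) := energyOn_potential_le hd B T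
      _ ≤ 4 * d * (n * (5 * d * R)) := by gcongr
      _ = 20 * d ^ 2 * (n : ℝ) ^ (1 + 2 / (d : ℝ)) := by
        rw [Real.rpow_add (by positivity), Real.rpow_one]; ring

end Potential

/-! ### Rotor-router aggregation -/

section RotorRouter

variable {d : ℕ} {D : ℝ} {r : Site d → ℕ → Dir d}

/-- The total increment of `f` over the first `c x` rotor moves out of each site `x ∈ B`. -/
def rotorIncrement (r : Site d → ℕ → Dir d) (f : Site d → ℝ) (B : Finset (Site d))
    (c : Site d → ℕ) : ℝ :=
  ∑ x ∈ B, ∑ i ∈ Finset.range (c x), grad f x (r x i)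

/-- The odometer: the number of visits to each site by the first `n` particles. -/
def odometer (r : Site d → ℕ → Dir d) (n : ℕ) : Site d → ℕ := (aggState r n).2.1

/-- The stopping site of the particle walking in `A_{n+1}`. -/
def stopSite (r : Site d → ℕ → Dir d) (n : ℕ) : Site d :=
  (walkState r (odometer r n) (exitSteps r (aggState r n).1 (odometer r n))).1

/-- The region `A_{n+1}` as a finite set. -/
def cluster (r : Site d → ℕ → Dir d) (n : ℕ) : Finset (Site d) :=
  insert 0 ((Finset.range n).image (stopSite r))

lemma cluster_succ (r : Site d → ℕ → Dir d) (n : ℕ) :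
    cluster r (n + 1) = insert (stopSite r n) (cluster r n) := by
  rw [cluster, Finset.range_add_one, Finset.image_insert, Finset.insert_comm, cluster]

lemma coe_cluster (r : Site d → ℕ → Dir d) (n : ℕ) :
    (cluster r n : Set (Site d)) = (aggState r n).1 := by
  induction n with
  | zero => simp [cluster, aggState]
  | succ n ih => rw [cluster_succ, Finset.coe_insert, ih]; rfl

lemma card_cluster_le (r : Site d → ℕ → Dir d) (n : ℕ) : (cluster r n).card ≤ n + 1 := by
  refine (Finset.card_insert_le _ _).trans (Nat.succ_le_succ ?_)
  simpa using Finset.card_image_le (s := Finset.range n) (f := stopSite r)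

lemma cluster_mono (r : Site d → ℕ → Dir d) : Monotone (cluster r) := fun _ _ hmn =>
  Finset.insert_subset_insert _ (Finset.image_subset_image (Finset.range_mono hmn))

-- If the walk never left `A_{n+1}`, `exitSteps` would be `sInf ∅ = 0`; this does not happen, but
-- allowing for it is harmless because the origin contributes nothing to `ψ`.
lemma stopSite_notMem_or_eq_zero (r : Site d → ℕ → Dir d) (n : ℕ) :
    stopSite r n ∉ cluster r n ∨ stopSite r n = 0 := by
  rw [← Finset.mem_coe, coe_cluster]
  rcases {t | (walkState r (odometer r n) t).1 ∉ (aggState r n).1}.eq_empty_or_nonempty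
    with hempty | hexit
  · right
    rw [stopSite, exitSteps, hempty, Nat.sInf_empty]
    rfl
  · exact .inl (Nat.sInf_mem hexit)

lemma sum_nsq_cluster (r : Site d → ℕ → Dir d) (n : ℕ) :
    ∑ x ∈ cluster r n, nsq x = ∑ k ∈ Finset.range n, nsq (stopSite r k) := by
  induction n with
  | zero => simp [cluster, nsq_zero]
  | succ n ih =>
    rw [cluster_succ, Finset.sum_range_succ, ← ih]
    rcases stopSite_notMem_or_eq_zero r n with hnew | hzero
    · rw [Finset.sum_insert hnew, add_comm]
    · rw [hzero, Finset.insert_eq_of_mem (by simp [cluster]), nsq_zero, add_zero]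

lemma psi_aggRegion_succ (r : Site d → ℕ → Dir d) (n : ℕ) :
    psi (aggRegion r (n + 1)) = ∑ x ∈ cluster r n, nsq x := by
  rw [← finsum_mem_coe_finset, coe_cluster]
  rfl

lemma rotorIncrement_update (r : Site d → ℕ → Dir d) (f : Site d → ℝ) {B : Finset (Site d)}
    (c : Site d → ℕ) {p : Site d} (hp : p ∈ B) :
    rotorIncrement r f B (Function.update c p (c p + 1))
      = rotorIncrement r f B c + grad f p (r p (c p)) := by
  have hoff : ∑ x ∈ B.erase p,
        ∑ i ∈ Finset.range (Function.update c p (c p + 1) x), grad f x (r x i)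
      = ∑ x ∈ B.erase p, ∑ i ∈ Finset.range (c x), grad f x (r x i) :=
    Finset.sum_congr rfl fun x hx => by
      rw [Function.update_of_ne (Finset.ne_of_mem_erase hx)]
  rw [rotorIncrement, rotorIncrement, ← Finset.add_sum_erase B _ hp, ← Finset.add_sum_erase B _ hp,
    Function.update_self, Finset.sum_range_succ, hoff]
  ring

lemma rotorIncrement_walkState (r : Site d → ℕ → Dir d) (f : Site d → ℝ) {B : Finset (Site d)}
    (c : Site d → ℕ) {t : ℕ} (hB : ∀ s < t, (walkState r c s).1 ∈ B) :
    rotorIncrement r f B (walkState r c t).2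
      = rotorIncrement r f B c + (f (walkState r c t).1 - f 0) := by
  induction t with
  | zero => simp [walkState]
  | succ t ih =>
    have hstep : walkState r c (t + 1) = rstep r (walkState r c t) :=
      Function.iterate_succ_apply' _ _ _
    rw [hstep, rstep, rotorIncrement_update r f _ (hB t t.lt_succ_self),
      ih fun s hs => hB s (hs.trans t.lt_succ_self), grad]
    ring

lemma rotorIncrement_odometer (r : Site d → ℕ → Dir d) (f : Site d → ℝ) {n : ℕ}
    {B : Finset (Site d)} (hB : cluster r n ⊆ B) :
    rotorIncrement r f B (odometer r n) = ∑ k ∈ Finset.range n, (f (stopSite r k) - f 0) := by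
  induction n with
  | zero => simp [rotorIncrement, odometer, aggState]
  | succ n ih =>
    have hB' : cluster r n ⊆ B := (cluster_mono r n.le_succ).trans hB
    rw [Finset.sum_range_succ, ← ih hB']
    refine rotorIncrement_walkState r f (odometer r n) fun s hs => hB' ?_
    rw [← Finset.mem_coe, coe_cluster]
    exact not_not.mp (Nat.notMem_of_lt_sInf hs)

lemma HasDiscrepancy.nonneg (hr : HasDiscrepancy d D r) : 0 ≤ D :=
  (abs_nonneg _).trans (hr 0 (r 0 0) 1 le_rfl)

lemma HasDiscrepancy.abs_sum_sub_le (hr : HasDiscrepancy d D r) (F : Dir d → ℝ) (x : Site d)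
    (m : ℕ) :
    |∑ i ∈ Finset.range m, F (r x i) - m * ((∑ ε, F ε) / (2 * d))| ≤ D * ∑ ε, |F ε| := by
  rcases Nat.eq_zero_or_pos m with rfl | hm
  · simpa using mul_nonneg hr.nonneg (Finset.sum_nonneg fun ε _ => abs_nonneg (F ε))
  set count : Dir d → ℝ := fun ε => ({i | i < m ∧ r x i = ε} : Set ℕ).ncard
  have hsum : ∑ i ∈ Finset.range m, F (r x i) = ∑ ε, count ε * F ε := by
    rw [← Finset.sum_fiberwise (Finset.range m) (r x)]
    refine Finset.sum_congr rfl fun ε _ => ?_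
    have hfiber : {i | i < m ∧ r x i = ε} = ((Finset.range m).filter (r x · = ε) : Set ℕ) := by
      ext i; simp
    simp only [count]
    rw [hfiber, Set.ncard_coe_finset, ← nsmul_eq_mul]
    exact Finset.sum_eq_card_nsmul fun i hi => by rw [(Finset.mem_filter.mp hi).2]
  calc |∑ i ∈ Finset.range m, F (r x i) - m * ((∑ ε, F ε) / (2 * d))|
      = |∑ ε, (count ε - m / (2 * d)) * F ε| := by
        simp only [hsum, sub_mul, Finset.sum_sub_distrib, ← Finset.mul_sum]
        ring_nf
    _ ≤ ∑ ε, D * |F ε| := by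
        refine (Finset.abs_sum_le_sum_abs _ _).trans (Finset.sum_le_sum fun ε _ => ?_)
        rw [abs_mul]
        exact mul_le_mul_of_nonneg_right (hr x ε m hm) (abs_nonneg _)
    _ = D * ∑ ε, |F ε| := (Finset.mul_sum _ _ _).symm

lemma HasDiscrepancy.abs_rotorIncrement_sub_le (hr : HasDiscrepancy d D r) (f : Site d → ℝ)
    (B : Finset (Site d)) (c : Site d → ℕ) :
    |rotorIncrement r f B c - ∑ x ∈ B, c x * laplacian f x|
      ≤ D * √(2 * d * B.card * energyOn f B) := by
  calc |rotorIncrement r f B c - ∑ x ∈ B, c x * laplacian f x|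
      ≤ ∑ x ∈ B, D * ∑ ε, |grad f x ε| := by
        rw [rotorIncrement, ← Finset.sum_sub_distrib]
        exact (Finset.abs_sum_le_sum_abs _ _).trans
          (Finset.sum_le_sum fun x _ => hr.abs_sum_sub_le (grad f x) x (c x))
    _ = D * ∑ x ∈ B, ∑ ε, |grad f x ε| := (Finset.mul_sum _ _ _).symm
    _ ≤ D * √(2 * d * B.card * energyOn f B) :=
        mul_le_mul_of_nonneg_left (sum_abs_grad_le f B) hr.nonneg

lemma HasDiscrepancy.abs_sum_stopSite_sub_le (hr : HasDiscrepancy d D r) (f : Site d → ℝ)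
    (n : ℕ) :
    |∑ k ∈ Finset.range n, (f (stopSite r k) - f 0)
        - ∑ x ∈ cluster r n, odometer r n x * laplacian f x|
      ≤ D * √(2 * d * (n + 1 : ℕ) * energyOn f (cluster r n)) := by
  have henergy : 0 ≤ energyOn f (cluster r n) :=
    Finset.sum_nonneg fun x _ => Finset.sum_nonneg fun ε _ => sq_nonneg _
  have hD := hr.nonneg
  rw [← rotorIncrement_odometer r f subset_rfl]
  refine (hr.abs_rotorIncrement_sub_le f (cluster r n) (odometer r n)).trans ?_
  gcongr
  exact card_cluster_le r n

end RotorRouter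

/-! ### The two test functions -/

section TestFunctions

variable {d : ℕ} {D : ℝ} {r : Site d → ℕ → Dir d}

lemma sqrt_energyOn_nsq_cluster_le (hd : 1 ≤ d) (r : Site d → ℕ → Dir d) (n : ℕ) :
    √(2 * d * (n + 1 : ℕ) * energyOn nsq (cluster r n))
      ≤ 4 * d * √((n + 1 : ℕ) * ∑ x ∈ cluster r n, nsq x) + 2 * d * (n + 1 : ℕ) := by
  set S := ∑ x ∈ cluster r n, nsq x
  have hS : 0 ≤ S := Finset.sum_nonneg fun x _ => nsq_nonneg x
  have hd1 : (1 : ℝ) ≤ d := mod_cast hd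
  have hcard : ((cluster r n).card : ℝ) ≤ (n + 1 : ℕ) := mod_cast card_cluster_le r n
  set N : ℝ := ((n + 1 : ℕ) : ℝ)
  rw [Real.sqrt_le_left (by positivity)]
  calc 2 * d * N * energyOn nsq (cluster r n)
      = 16 * d * (N * S) + 4 * d ^ 2 * N * (cluster r n).card := by rw [energyOn_nsq]; ring
    _ ≤ 16 * d ^ 2 * (N * S) + 4 * d ^ 2 * N * N := by
        gcongr; exact le_self_pow₀ hd1 two_ne_zero
    _ = (4 * d * √(N * S)) ^ 2 + (2 * d * N) ^ 2 := by
        rw [mul_pow _ √(N * S), Real.sq_sqrt (by positivity)]; ring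
    _ ≤ (4 * d * √(N * S) + 2 * d * N) ^ 2 :=
        pow_add_pow_le (by positivity) (by positivity) two_ne_zero

lemma HasDiscrepancy.sum_nsq_cluster_le (hr : HasDiscrepancy d D r) (hd : 1 ≤ d) (n : ℕ) :
    ∑ x ∈ cluster r n, nsq x
      ≤ ∑ x ∈ cluster r n, (odometer r n x : ℝ)
        + D * (4 * d * √((n + 1 : ℕ) * ∑ x ∈ cluster r n, nsq x) + 2 * d * (n + 1 : ℕ)) := by
  have hbalance := (le_abs_self _).trans (hr.abs_sum_stopSite_sub_le nsq n)
  simp only [laplacian_nsq hd, nsq_zero, mul_one, sub_zero, ← sum_nsq_cluster] at hbalance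
  have herror := mul_le_mul_of_nonneg_left (sqrt_energyOn_nsq_cluster_le hd r n) hr.nonneg
  linarith

lemma sqrt_superharmonic_energy_le (hd : 1 ≤ d) {n : ℕ} (hn : 1 ≤ n) {E : ℝ}
    (hE : E ≤ 20 * d ^ 2 * (n : ℝ) ^ (1 + 2 / (d : ℝ))) :
    √(2 * d * n * E) ≤ 7 * d ^ 2 * (n : ℝ) ^ (1 + 1 / (d : ℝ)) := by
  have hd1 : (1 : ℝ) ≤ d := mod_cast hd
  have hsq : ((n : ℝ) ^ (1 + 1 / (d : ℝ))) ^ 2 = n * (n : ℝ) ^ (1 + 2 / (d : ℝ)) := by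
    rw [sq, ← Real.rpow_add (by positivity), ← Real.rpow_one_add' (by positivity) (by positivity)]
    ring_nf
  rw [Real.sqrt_le_left (by positivity)]
  calc 2 * d * n * E ≤ 2 * d * n * (20 * d ^ 2 * (n : ℝ) ^ (1 + 2 / (d : ℝ))) := by gcongr
    _ = 40 * (d : ℝ) ^ 3 * ((n : ℝ) ^ (1 + 1 / (d : ℝ))) ^ 2 := by rw [hsq]; ring
    _ ≤ 49 * (d : ℝ) ^ 4 * ((n : ℝ) ^ (1 + 1 / (d : ℝ))) ^ 2 := by gcongr <;> norm_num
    _ = (7 * d ^ 2 * (n : ℝ) ^ (1 + 1 / (d : ℝ))) ^ 2 := by ring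

lemma HasDiscrepancy.sum_odometer_le (hr : HasDiscrepancy d D r) (hd : 1 ≤ d) (n : ℕ) :
    ∑ x ∈ cluster r n, (odometer r n x : ℝ)
      ≤ 10 * d * ((n + 1 : ℕ) : ℝ) ^ (1 + 2 / (d : ℝ))
        + 14 * d ^ 2 * D * ((n + 1 : ℕ) : ℝ) ^ (1 + 1 / (d : ℝ)) := by
  obtain ⟨f, hf, hlaplacian, henergy⟩ := exists_superharmonic hd n.succ_pos (card_cluster_le r n)
  have hvisits : ∑ x ∈ cluster r n, odometer r n x * laplacian f x
      ≤ -(∑ x ∈ cluster r n, (odometer r n x : ℝ)) / 2 := by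
    rw [neg_div, Finset.sum_div, ← Finset.sum_neg_distrib]
    refine Finset.sum_le_sum fun x hx => ?_
    nlinarith [hlaplacian x hx, (odometer r n x).cast_nonneg (α := ℝ)]
  have hincrement : -(5 * d * ((n + 1 : ℕ) : ℝ) ^ (1 + 2 / (d : ℝ)))
      ≤ ∑ k ∈ Finset.range n, (f (stopSite r k) - f 0) := by
    set R : ℝ := ((n + 1 : ℕ) : ℝ) ^ (2 / (d : ℝ))
    calc -(5 * d * ((n + 1 : ℕ) : ℝ) ^ (1 + 2 / (d : ℝ)))
        = -((n + 1 : ℕ) * (5 * d * R)) := by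
          rw [Real.rpow_add (by positivity), Real.rpow_one]; ring
      _ ≤ -(n * (5 * d * R)) := by gcongr; exact n.le_succ
      _ = ∑ k ∈ Finset.range n, -(5 * d * R) := by simp
      _ ≤ ∑ k ∈ Finset.range n, (f (stopSite r k) - f 0) :=
          Finset.sum_le_sum fun k _ => by linarith [(hf (stopSite r k)).1, (hf 0).2]
  have hbalance := (abs_le.mp (hr.abs_sum_stopSite_sub_le f n)).2
  have herror := mul_le_mul_of_nonneg_left
    (sqrt_superharmonic_energy_le hd n.succ_pos henergy) hr.nonneg
  linarith

lemma HasDiscrepancy.psi_aggRegion_le (hr : HasDiscrepancy d D r) (hd : 1 ≤ d) {n : ℕ}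
    (hn : 1 ≤ n) :
    psi (aggRegion r n) ≤ 16 * d ^ 2 *
      (D * (√(n * psi (aggRegion r n)) + (n : ℝ) ^ (1 + 1 / (d : ℝ)))
        + (n : ℝ) ^ (1 + 2 / (d : ℝ))) := by
  obtain ⟨n, rfl⟩ := Nat.exists_eq_add_of_le' hn
  have hnsq := hr.sum_nsq_cluster_le hd n
  have hvisits := hr.sum_odometer_le hd n
  have hD := hr.nonneg
  rw [psi_aggRegion_succ]
  set S := ∑ x ∈ cluster r n, nsq x
  set N : ℝ := ((n + 1 : ℕ) : ℝ)
  set P := N ^ (1 + 2 / (d : ℝ))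
  set Q := N ^ (1 + 1 / (d : ℝ))
  have hd1 : (1 : ℝ) ≤ d := mod_cast hd
  have hdd : (d : ℝ) ≤ d ^ 2 := le_self_pow₀ hd1 two_ne_zero
  have hNQ : N ≤ Q := Real.self_le_rpow_of_one_le (Nat.one_le_cast.mpr hn) (by simp)
  calc S ≤ 10 * d * P + 14 * d ^ 2 * D * Q + D * (4 * d * √(N * S) + 2 * d * N) := by linarith
    _ ≤ 16 * d ^ 2 * P + 14 * d ^ 2 * D * Q
          + D * (16 * d ^ 2 * √(N * S) + 2 * d ^ 2 * Q) := by gcongr <;> norm_num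
    _ = 16 * d ^ 2 * (D * (√(N * S) + Q) + P) := by ring

end TestFunctions

/-! ### Bootstrapping -/

section Bootstrapping

variable {d : ℕ} {c α β D : ℝ} {n : ℕ}

lemma mul_sqrt_mul_le_of_le_rpow (hD : 0 < D) (hn : 1 ≤ n) {S : ℝ}
    (hS : S ≤ c * D ^ α * (n : ℝ) ^ β) :
    D * √(n * S) ≤ √c * (D ^ (1 + α / 2) * (n : ℝ) ^ ((1 + β) / 2)) := by
  have hn0 : (0 : ℝ) < n := mod_cast hn
  have hprod : n * (c * D ^ α * (n : ℝ) ^ β) = c * (D ^ (α / 2) * (n : ℝ) ^ ((1 + β) / 2)) ^ 2 := by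
    rw [mul_pow, ← Real.rpow_mul_natCast hD.le, ← Real.rpow_mul_natCast hn0.le, Nat.cast_two,
      div_mul_cancel₀ _ two_ne_zero, div_mul_cancel₀ _ two_ne_zero, Real.rpow_add hn0,
      Real.rpow_one]
    ring
  calc D * √(n * S) ≤ D * √(c * (D ^ (α / 2) * (n : ℝ) ^ ((1 + β) / 2)) ^ 2) := by
        rw [← hprod]; gcongr
    _ = √c * (D ^ (1 + α / 2) * (n : ℝ) ^ ((1 + β) / 2)) := by
        rw [Real.sqrt_mul' _ (sq_nonneg _), Real.sqrt_sq (by positivity), Real.rpow_add hD,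
          Real.rpow_one]
        ring

lemma mul_rpow_le_rpow_mul_rpow (hα : 0 ≤ α) (hβ : 1 + 2 / (d : ℝ) ≤ β) (hD : 1 ≤ D)
    (hn : 1 ≤ n) :
    D * (n : ℝ) ^ (1 + 1 / (d : ℝ)) ≤ D ^ (1 + α / 2) * (n : ℝ) ^ ((1 + β) / 2) := by
  have hn1 : (1 : ℝ) ≤ n := mod_cast hn
  gcongr
  · exact Real.self_le_rpow_of_one_le hD (by linarith)
  · rw [le_div_iff₀ two_pos]
    linarith [show 2 / (d : ℝ) = 2 * (1 / d) by ring]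

theorem lemma_bootstrapping_general (hd : 1 ≤ d) (hα : 0 ≤ α) (hβ : 1 + 2 / (d : ℝ) ≤ β)
    (hD : 1 ≤ D) {r : Site d → ℕ → Dir d} (hr : HasDiscrepancy d D r) (hn : 1 ≤ n)
    (hψ : psi (aggRegion r n) ≤ c * D ^ α * (n : ℝ) ^ β) :
    psi (aggRegion r n) ≤ 16 * d ^ 2 * (√c + 1) *
      (D ^ (1 + α / 2) * (n : ℝ) ^ ((1 + β) / 2) + (n : ℝ) ^ (1 + 2 / (d : ℝ))) := by
  have hsqrt := mul_sqrt_mul_le_of_le_rpow (zero_lt_one.trans_le hD) hn hψ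
  have hpow := mul_rpow_le_rpow_mul_rpow hα hβ hD hn
  set X := D ^ (1 + α / 2) * (n : ℝ) ^ ((1 + β) / 2)
  set P := (n : ℝ) ^ (1 + 2 / (d : ℝ))
  calc psi (aggRegion r n)
      ≤ 16 * d ^ 2 * (D * (√(n * psi (aggRegion r n)) + (n : ℝ) ^ (1 + 1 / (d : ℝ))) + P) :=
        hr.psi_aggRegion_le hd hn
    _ ≤ 16 * d ^ 2 * (√c * X + X + (√c * P + P)) := by
        rw [mul_add D]
        gcongr
        exact le_add_of_nonneg_left (by positivity)
    _ = 16 * d ^ 2 * (√c + 1) * (X + P) := by ring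

end Bootstrapping

theorem lemma_bootstrapping (d : ℕ) (hd : 1 ≤ d) (c α β : ℝ) (hα : 1 ≤ α)
    (hβ : 1 + 2 / (d : ℝ) ≤ β) (hc : 0 < c) :
    ∃ c' : ℝ, ∀ (D : ℝ), 1 ≤ D → ∀ r : Site d → ℕ → Dir d, HasDiscrepancy d D r →
      (∀ n : ℕ, 1 ≤ n → psi (aggRegion r n) ≤ c * D ^ α * (n : ℝ) ^ β) →
      ∀ n : ℕ, 1 ≤ n →
        psi (aggRegion r n)
          ≤ c' * (D ^ (1 + α / 2) * (n : ℝ) ^ ((1 + β) / 2) + (n : ℝ) ^ (1 + 2 / (d : ℝ))) :=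
  ⟨16 * d ^ 2 * (√c + 1), fun _ hD _ hr hψ n hn =>
    lemma_bootstrapping_general hd (zero_le_one.trans hα) hβ hD hr hn (hψ n hn)⟩

end RotorRouterPaper
end
end

section
/- In dimension d = 2 there exist constants a, c > 0 such that for all integers k, r with 1 ≤ k ≤ r and r − a log r > 0, p(k, r) ≤ c ((k + a log r)/(r − a log r))^{2/3}. -/
open scoped BigOperators Pointwise symmDiff
open MeasureTheory Filter

noncomputable section
open scoped Classical
namespace RotorRouterPaper

/-!
The complement of the quadrant is a wedge of opening `3π / 2`, on which `Re z ^ (2 / 3)` is positive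
and harmonic and vanishes on the sides. Adding the lower-order term `π² - (arg z)²` makes it
superharmonic for the lattice far from the apex, and moving the apex a constant distance into the
quadrant makes it so at every site outside the quadrant. The resulting barrier `W` is of order at
most `k ^ (2 / 3)` on the cube of radius `k`, and at distance `m` from the quadrant in the cube of
radius `N` it is at least of order `m * N ^ (-1 / 3)`. Comparison with a discrete harmonic
quadratic polynomial shows that `h_r ≤ 2 * m / N` on the boundary of that cube when
`N ≤ (r + 1) / 2`. The maximum principle then gives `h_r ≤ C * N ^ (-2 / 3) * W` inside it, and `N`
can be taken comparable to `r`.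
-/

section LatticeAverage

variable {d : ℕ}

/-- The operator averaging a function over the `2d` lattice neighbours of each site. A function `u`
is discrete harmonic (sub-, superharmonic) at `x` when `u x = neighborAverage d u x`
(`≤`, `≥` respectively). -/
def neighborAverage (d : ℕ) : (Site d → ℝ) →ₗ[ℝ] Site d → ℝ where
  toFun u x := (1 / (2 * (d : ℝ))) * ∑ i, (u (x + unitVec d i) + u (x - unitVec d i))
  map_add' u v := by
    ext x
    simp only [Pi.add_apply, Finset.sum_add_distrib]
    ring
  map_smul' c u := by
    ext x
    simp only [Pi.smul_apply, smul_eq_mul, RingHom.id_apply, Finset.sum_add_distrib,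
      ← Finset.mul_sum]
    ring

theorem neighborAverage_apply (u : Site d → ℝ) (x : Site d) :
    neighborAverage d u x =
      (1 / (2 * (d : ℝ))) * ∑ i, (u (x + unitVec d i) + u (x - unitVec d i)) :=
  rfl

theorem neighborAverage_two (u : Site 2 → ℝ) (x : Site 2) :
    neighborAverage 2 u x = (u (x + unitVec 2 0) + u (x - unitVec 2 0) +
      (u (x + unitVec 2 1) + u (x - unitVec 2 1))) / 4 := by
  rw [neighborAverage_apply, Fin.sum_univ_two]
  push_cast
  ring

theorem neighborAverage_one [NeZero d] (x : Site d) : neighborAverage d 1 x = 1 := by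
  have hd : (d : ℝ) ≠ 0 := NeZero.ne _
  simp only [neighborAverage_apply, Pi.one_apply, Finset.sum_const, Finset.card_univ,
    Fintype.card_fin, nsmul_eq_mul]
  field_simp
  norm_num

theorem le_apply_add_unitVec_of_le_neighborAverage {u : Site d → ℝ} {x : Site d} {M : ℝ}
    (hle : ∀ i, u (x + unitVec d i) ≤ M ∧ u (x - unitVec d i) ≤ M)
    (hM : M ≤ neighborAverage d u x) (i : Fin d) : M ≤ u (x + unitVec d i) := by
  by_contra! hlt
  have hd : (0 : ℝ) < d := by exact_mod_cast i.pos
  have hsum : ∑ j, (u (x + unitVec d j) + u (x - unitVec d j)) < ∑ _j : Fin d, 2 * M :=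
    Finset.sum_lt_sum (fun j _ => by linarith [hle j]) ⟨i, Finset.mem_univ i, by linarith [hle i]⟩
  rw [Finset.sum_const, Finset.card_univ, Fintype.card_fin, nsmul_eq_mul] at hsum
  rw [neighborAverage_apply, one_div_mul_eq_div, le_div_iff₀ (by positivity)] at hM
  linarith

theorem nonpos_of_le_neighborAverage [NeZero d] {A B : Set (Site d)} {u : Site d → ℝ}
    (hA : A.Finite) (hAB : ∀ x ∈ A, ∀ i, x + unitVec d i ∈ B ∧ x - unitVec d i ∈ B)
    (hu : ∀ x ∈ A, u x ≤ neighborAverage d u x) (hB : ∀ x ∈ B \ A, u x ≤ 0) :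
    ∀ x ∈ A, u x ≤ 0 := by
  intro x hx
  by_contra! hpos
  obtain ⟨p, hpA, hp⟩ := hA.exists_maximalFor u A ⟨x, hx⟩
  have hmax : ∀ y ∈ A, u y ≤ u p := fun y hy => (le_total (u y) (u p)).elim id (hp hy)
  have hMpos : 0 < u p := hpos.trans_le (hmax x hx)
  let i : Fin d := 0
  -- Among the maximisers take one that is extreme in a coordinate direction: its neighbour in that
  -- direction is again a maximiser, which is absurd.
  obtain ⟨q, ⟨hqA, hqp⟩, hq⟩ := (hA.subset (Set.sep_subset A fun y => u y = u p)).exists_maximalFor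
    (fun y => y i) _ ⟨p, hpA, rfl⟩
  have hnbr : ∀ y ∈ B, u y ≤ u p := fun y hyB => by
    by_cases hyA : y ∈ A
    · exact hmax y hyA
    · exact (hB y ⟨hyB, hyA⟩).trans hMpos.le
  have hge : u p ≤ u (q + unitVec d i) := le_apply_add_unitVec_of_le_neighborAverage
    (fun j => (hAB q hqA j).imp (hnbr _) (hnbr _)) (hqp ▸ hu q hqA) i
  have hmem : q + unitVec d i ∈ A := by
    by_contra hnot
    exact (hMpos.trans_le hge).not_ge (hB _ ⟨(hAB q hqA i).1, hnot⟩)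
  have hlast := hq ⟨hmem, (hmax _ hmem).antisymm hge⟩
  simp [unitVec] at hlast

theorem le_of_le_neighborAverage_of_neighborAverage_le [NeZero d] {A B : Set (Site d)}
    {u v : Site d → ℝ} (hA : A.Finite)
    (hAB : ∀ x ∈ A, ∀ i, x + unitVec d i ∈ B ∧ x - unitVec d i ∈ B)
    (hu : ∀ x ∈ A, u x ≤ neighborAverage d u x) (hv : ∀ x ∈ A, neighborAverage d v x ≤ v x)
    (hB : ∀ x ∈ B \ A, u x ≤ v x) : ∀ x ∈ B, u x ≤ v x := by
  intro x hxB
  by_cases hxA : x ∈ A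
  · refine sub_nonpos.mp (nonpos_of_le_neighborAverage (u := u - v) hA hAB (fun y hy => ?_)
      (fun y hy => sub_nonpos.mpr (hB y hy)) x hxA)
    rw [map_sub]
    exact sub_le_sub (hu y hy) (hv y hy)
  · exact hB x ⟨hxB, hxA⟩

theorem eq_zero_of_eq_neighborAverage [NeZero d] {A : Set (Site d)} {u : Site d → ℝ}
    (hA : A.Finite) (hu : ∀ x ∈ A, u x = neighborAverage d u x) (hzero : ∀ x ∉ A, u x = 0) :
    u = 0 := by
  have hle := le_of_le_neighborAverage_of_neighborAverage_le (B := Set.univ) (v := 0) hA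
    (fun _ _ _ => ⟨trivial, trivial⟩) (fun x hx => (hu x hx).le) (by simp)
    (fun x hx => (hzero x hx.2).le)
  have hge := le_of_le_neighborAverage_of_neighborAverage_le (B := Set.univ) (u := 0) hA
    (fun _ _ _ => ⟨trivial, trivial⟩) (by simp) (fun x hx => (hu x hx).ge)
    (fun x hx => (hzero x hx.2).ge)
  exact funext fun x => (hle x trivial).antisymm (hge x trivial)

theorem exists_eq_neighborAverage_of_finite [NeZero d] {A : Set (Site d)} (hA : A.Finite)
    (g : Site d → ℝ) :
    ∃ u : Site d → ℝ, (∀ x ∉ A, u x = g x) ∧ ∀ x ∈ A, u x = neighborAverage d u x := by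
  have := hA.to_subtype
  let extend : (A → ℝ) →ₗ[ℝ] Site d → ℝ := Function.ExtendByZero.linearMap ℝ Subtype.val
  have extend_off : ∀ v, ∀ x ∉ A, extend v x = 0 := fun v x hx =>
    Function.extend_apply' _ _ _ fun ⟨y, hy⟩ => hx (hy ▸ y.2)
  have extend_on : ∀ v (x : A), extend v x = v x := fun v x =>
    Subtype.val_injective.extend_apply v 0 x
  let laplacian : (A → ℝ) →ₗ[ℝ] A → ℝ :=
    LinearMap.funLeft ℝ ℝ Subtype.val ∘ₗ (LinearMap.id - neighborAverage d) ∘ₗ extend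
  have hinj : Function.Injective laplacian := by
    refine (injective_iff_map_eq_zero laplacian).mpr fun v hv => ?_
    have hzero : extend v = 0 := eq_zero_of_eq_neighborAverage hA
      (fun x hx => sub_eq_zero.mp (congrFun hv ⟨x, hx⟩)) (extend_off v)
    exact funext fun x => (extend_on v x).symm.trans (congrFun hzero x)
  obtain ⟨v, hv⟩ := LinearMap.injective_iff_surjective.mp hinj
    fun x => neighborAverage d (Aᶜ.indicator g) x
  refine ⟨extend v + Aᶜ.indicator g, fun x hx => ?_, fun x hx => ?_⟩
  · simp [extend_off v x hx, hx]
  · have hvx : extend v x - neighborAverage d (extend v) x =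
        neighborAverage d (Aᶜ.indicator g) x := congrFun hv ⟨x, hx⟩
    rw [map_add, Pi.add_apply, Pi.add_apply, Set.indicator_of_notMem (by simpa using hx), ← hvx]
    ring

end LatticeAverage

section OrthantHarmonic

variable {d r : ℕ}

theorem finite_cubeSet (d r : ℕ) : (cubeSet d r).Finite :=
  (Set.finite_Icc (fun _ => -(r : ℤ)) (fun _ => (r : ℤ))).subset fun _ hx =>
    ⟨fun i => (abs_le.mp (hx i)).1, fun i => (abs_le.mp (hx i)).2⟩

theorem isOrthHarm_orthHarm (d r : ℕ) [NeZero d] : IsOrthHarm d r (orthHarm d r) := by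
  obtain ⟨u, hoff, hharm⟩ := exists_eq_neighborAverage_of_finite
    ((finite_cubeSet d r).sdiff (t := orthant d)) ((cubeBdry d r \ orthant d).indicator 1)
  have hex : ∃ f, IsOrthHarm d r f := by
    refine ⟨u, fun x hx => ?_, fun x hx => ?_, fun x hx => ?_, hharm⟩
    · rw [hoff x fun h => hx (.inl h.1), Set.indicator_of_notMem fun h => hx (.inr h.1)]
    · rw [hoff x fun h => h.2 hx.1, Set.indicator_of_notMem fun h => h.2 hx.1]
    · have hcube : x ∉ cubeSet d r := fun h => by
        obtain ⟨i, hi⟩ := hx.1.2.1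
        linarith [h i]
      rw [hoff x fun h => hcube h.1, Set.indicator_of_mem hx, Pi.one_apply]
  rw [orthHarm, dif_pos hex]
  exact hex.choose_spec

theorem orthHarm_eq_neighborAverage [NeZero d] {x : Site d} (hx : x ∈ cubeSet d r \ orthant d) :
    orthHarm d r x = neighborAverage d (orthHarm d r) x :=
  (isOrthHarm_orthHarm d r).2.2.2 x hx

theorem orthHarm_eq_zero_of_mem_orthant [NeZero d] {x : Site d} (hx : x ∈ orthant d) :
    orthHarm d r x = 0 := by
  by_cases hmem : x ∈ cubeSet d r ∪ cubeBdry d r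
  · exact (isOrthHarm_orthHarm d r).2.1 x ⟨hx, hmem⟩
  · exact (isOrthHarm_orthHarm d r).1 x hmem

theorem orthHarm_le_one [NeZero d] (x : Site d) : orthHarm d r x ≤ 1 := by
  refine le_of_le_neighborAverage_of_neighborAverage_le (A := cubeSet d r \ orthant d)
    (B := Set.univ) (v := 1) (finite_cubeSet d r).sdiff (fun _ _ _ => ⟨trivial, trivial⟩)
    (fun y hy => (orthHarm_eq_neighborAverage hy).le) (fun y _ => (neighborAverage_one y).le)
    (fun y hy => ?_) x trivial
  by_cases hQ : y ∈ orthant d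
  · exact (orthHarm_eq_zero_of_mem_orthant hQ).trans_le zero_le_one
  by_cases hbdry : y ∈ cubeBdry d r
  · exact ((isOrthHarm_orthHarm d r).2.2.1 y ⟨hbdry, hQ⟩).le
  · exact ((isOrthHarm_orthHarm d r).1 y
      fun h => h.elim (fun hcube => hy.2 ⟨hcube, hQ⟩) hbdry).trans_le zero_le_one

end OrthantHarmonic

section QuarterTurns

open Complex Asymptotics Topology

/-- The sum of `f` over the four quarter-turn rotations `±a`, `±I * a` of `a`: for `a` a lattice
step this is the sum over the four nearest neighbours in the plane. -/
def rotationSum {E : Type*} [Add E] (f : ℂ → E) (a : ℂ) : E :=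
  f a + f (-a) + (f (I * a) + f (-(I * a)))

theorem rotationSum_add_eq_rotationSum_mul_one_add {E : Type*} [Add E] (f : ℂ → E) {z : ℂ}
    (hz : z ≠ 0) (b : ℂ) :
    rotationSum (fun v => f (z + v)) b = rotationSum (fun v => f (z * (1 + v))) (b / z) := by
  simp only [rotationSum]
  congr! 3 <;> field_simp

-- In the Taylor expansion of `f`, the terms of degree one, two and three cancel.
theorem isBigO_rotationSum_sub {E : Type*} [NormedAddCommGroup E] [NormedSpace ℂ E] {f : ℂ → E}
    {z : ℂ} (hf : AnalyticAt ℂ f z) :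
    (fun a => rotationSum (fun b => f (z + b)) a - (4 : ℂ) • f z) =O[𝓝 0] fun a => ‖a‖ ^ 4 := by
  obtain ⟨p, hp⟩ := hf
  have hrot (u : ℂ) (hu : ‖u‖ = 1) :
      (fun a => f (z + u * a) - p.partialSum 4 (u * a)) =O[𝓝 0] fun a => ‖a‖ ^ 4 := by
    have hu0 : Tendsto (u * ·) (𝓝 0) (𝓝 0) := by
      simpa using (continuous_const_mul u).tendsto 0
    simpa [Function.comp_def, hu] using (hp.isBigO_sub_partialSum_pow 4).comp_tendsto hu0
  have hz : f z = p.coeff 0 := (hp.coeff_zero _).symm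
  refine (((hrot 1 (by simp)).add (hrot (-1) (by simp))).add
    ((hrot I (by simp)).add (hrot (-I) (by simp)))).congr_left fun a => ?_
  simp only [rotationSum, hz, FormalMultilinearSeries.partialSum, Finset.sum_range_succ,
    Finset.sum_range_zero, FormalMultilinearSeries.apply_eq_pow_smul_coeff, one_mul, neg_mul]
  match_scalars <;> ring_nf
  all_goals simp only [I_sq]; ring

theorem eventually_norm_rotationSum_sub_le {E : Type*} [NormedAddCommGroup E] [NormedSpace ℂ E]
    {f : ℂ → E} {z : ℂ} (hf : AnalyticAt ℂ f z) {n : ℕ} (hn : n < 4) {ε : ℝ} (hε : 0 < ε) :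
    ∀ᶠ a in 𝓝 0, ‖rotationSum (fun b => f (z + b)) a - (4 : ℂ) • f z‖ ≤ ε * ‖a‖ ^ n := by
  have hpow : (fun a : ℂ => ‖a‖ ^ 4) =o[𝓝 0] fun a => ‖a‖ ^ n := isLittleO_norm_pow_norm_pow hn
  simpa using ((isBigO_rotationSum_sub hf).trans_isLittleO hpow).def hε

theorem abs_arg_one_add_sub_im_le {b : ℂ} (hb : ‖b‖ ≤ 1 / 4) :
    |(1 + b).arg - b.im| ≤ ‖b‖ / 4 := by
  have hinv : (1 - ‖b‖)⁻¹ ≤ 2 := by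
    rw [inv_le_comm₀ (by linarith) two_pos]
    linarith
  calc |(1 + b).arg - b.im| = |(log (1 + b) - b).im| := by rw [sub_im, log_im]
    _ ≤ ‖log (1 + b) - b‖ := abs_im_le_norm _
    _ ≤ ‖b‖ ^ 2 * (1 - ‖b‖)⁻¹ / 2 := norm_log_one_add_sub_self_le (by linarith)
    _ ≤ ‖b‖ ^ 2 * 2 / 2 := by gcongr
    _ ≤ ‖b‖ / 4 := by nlinarith [norm_nonneg b]

theorem abs_arg_one_add_lt {b : ℂ} (hb : ‖b‖ ≤ 1 / 4) : |(1 + b).arg| < Real.pi / 4 := by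
  have hsub := abs_sub_le (1 + b).arg b.im 0
  rw [sub_zero, sub_zero] at hsub
  linarith [abs_arg_one_add_sub_im_le hb, abs_im_le_norm b, Real.pi_gt_three]

theorem half_sq_norm_le_rotationSum_sq_arg {a : ℂ} (ha : ‖a‖ ≤ 1 / 4) :
    ‖a‖ ^ 2 / 2 ≤ rotationSum (fun b => (1 + b).arg ^ 2) a := by
  have hsq (b : ℂ) (hb : ‖b‖ = ‖a‖) : b.im ^ 2 / 2 - ‖a‖ ^ 2 / 16 ≤ (1 + b).arg ^ 2 := by
    have h := sq_le_sq' (by linarith [norm_nonneg a, abs_nonneg ((1 + b).arg - b.im)])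
      (abs_arg_one_add_sub_im_le (hb.trans_le ha))
    rw [sq_abs, hb] at h
    nlinarith [sq_nonneg (2 * (1 + b).arg - b.im)]
  have h₁ := hsq a rfl
  have h₂ := hsq (-a) (by simp)
  have h₃ := hsq (I * a) (by simp)
  have h₄ := hsq (-(I * a)) (by simp)
  have hnorm : ‖a‖ ^ 2 = a.re ^ 2 + a.im ^ 2 := by rw [← normSq_eq_norm_sq, normSq_apply]; ring
  simp only [neg_im, I_mul_im, neg_sq] at h₂ h₃ h₄
  simp only [rotationSum]
  linarith [sq_nonneg ‖a‖]

end QuarterTurns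

section PlanarBarrier

open Complex Topology Bornology

theorem norm_mul_sin_sub_abs_arg (z : ℂ) :
    ‖z‖ * Real.sin (3 * Real.pi / 4 - |z.arg|) = √2 / 2 * (z.re + |z.im|) := by
  have hangle : 3 * Real.pi / 4 = Real.pi - Real.pi / 4 := by ring
  have him : ‖z‖ * Real.sin |z.arg| = |z.im| := by
    rw [← norm_mul_sin_arg z, abs_mul, abs_norm,
      ← Real.abs_sin_eq_sin_abs_of_abs_le_pi (abs_arg_le_pi z)]
  rw [Real.sin_sub, hangle, Real.sin_pi_sub, Real.cos_pi_sub, Real.sin_pi_div_four,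
    Real.cos_pi_div_four, Real.cos_abs, ← him, ← norm_mul_cos_arg z]
  ring

theorem abs_arg_le_of_nonneg_re_add_abs_im {z : ℂ} (hz : 0 ≤ z.re + |z.im|) :
    |z.arg| ≤ 3 * Real.pi / 4 := by
  by_contra! hlt
  have hz0 : z ≠ 0 := by
    rintro rfl
    rw [arg_zero, abs_zero] at hlt
    linarith [Real.pi_pos]
  have hsin : Real.sin (3 * Real.pi / 4 - |z.arg|) < 0 :=
    Real.sin_neg_of_neg_of_neg_pi_lt (by linarith) (by linarith [abs_arg_le_pi z, Real.pi_pos])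
  have hneg := mul_neg_of_pos_of_neg (norm_pos_iff.mpr hz0) hsin
  rw [norm_mul_sin_sub_abs_arg] at hneg
  exact hneg.not_ge (by positivity)

theorem mul_sin_le_cos_two_thirds_mul {θ : ℝ} (h0 : 0 ≤ θ) (hθ : θ ≤ 3 * Real.pi / 4) :
    4 / (3 * Real.pi) * Real.sin (3 * Real.pi / 4 - θ) ≤ Real.cos (2 / 3 * θ) := by
  calc 4 / (3 * Real.pi) * Real.sin (3 * Real.pi / 4 - θ)
      ≤ 4 / (3 * Real.pi) * (3 * Real.pi / 4 - θ) := by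
        gcongr
        exact Real.sin_le (by linarith)
    _ = 1 - 2 / Real.pi * (2 / 3 * θ) := by field_simp; ring
    _ ≤ Real.cos (2 / 3 * θ) :=
        Real.one_sub_mul_le_cos (by positivity) (by linarith [Real.pi_pos])

theorem quarter_mul_norm_rpow_le_re_cpow {z : ℂ} (hz0 : z ≠ 0) (hz : 0 ≤ z.re + |z.im|) :
    (z.re + |z.im|) / 4 * ‖z‖ ^ (-(1 / 3) : ℝ) ≤ (z ^ ((2 / 3 : ℝ) : ℂ)).re := by
  have hnorm : 0 < ‖z‖ := norm_pos_iff.mpr hz0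
  have harg := abs_arg_le_of_nonneg_re_add_abs_im hz
  set θ := |z.arg|
  have hconst : 1 / 4 ≤ 4 / (3 * Real.pi) * (√2 / 2) := by
    have hsqrt : 1.4 ≤ √2 := Real.le_sqrt_of_sq_le (by norm_num)
    rw [div_mul_div_comm, div_le_div_iff₀ four_pos (by positivity)]
    linarith [Real.pi_lt_d2]
  have hpow : ‖z‖ ^ (2 / 3 : ℝ) = ‖z‖ ^ (-(1 / 3) : ℝ) * ‖z‖ := by
    rw [← Real.rpow_add_one hnorm.ne']
    norm_num
  calc (z.re + |z.im|) / 4 * ‖z‖ ^ (-(1 / 3) : ℝ)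
      = ‖z‖ ^ (-(1 / 3) : ℝ) * (1 / 4 * (z.re + |z.im|)) := by ring
    _ ≤ ‖z‖ ^ (-(1 / 3) : ℝ) * (4 / (3 * Real.pi) * (√2 / 2) * (z.re + |z.im|)) := by gcongr
    _ = ‖z‖ ^ (2 / 3 : ℝ) * (4 / (3 * Real.pi) * Real.sin (3 * Real.pi / 4 - θ)) := by
        rw [mul_assoc (4 / (3 * Real.pi)), ← norm_mul_sin_sub_abs_arg, hpow]
        ring
    _ ≤ ‖z‖ ^ (2 / 3 : ℝ) * Real.cos (2 / 3 * θ) := by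
        gcongr
        exact mul_sin_le_cos_two_thirds_mul (abs_nonneg _) harg
    _ = (z ^ ((2 / 3 : ℝ) : ℂ)).re := by
        rw [cpow_ofReal_re, ← Real.cos_abs (z.arg * _), abs_mul,
          abs_of_pos (by norm_num : (0 : ℝ) < 2 / 3), mul_comm |z.arg|]

/-- The barrier on the wedge `|arg z| ≤ 3π/4`. The harmonic function `Re z ^ (2 / 3)` vanishes on
the sides of the wedge; `π² - (arg z)²` has Laplacian `-2 / ‖z‖ ^ 2`, which beats the error made
when the Laplacian of `Re z ^ (2 / 3)` is discretized. -/
def planarBarrier (z : ℂ) : ℝ :=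
  (z ^ ((2 / 3 : ℝ) : ℂ)).re + (Real.pi ^ 2 - z.arg ^ 2)

theorem re_cpow_le_planarBarrier (z : ℂ) : (z ^ ((2 / 3 : ℝ) : ℂ)).re ≤ planarBarrier z := by
  have harg : z.arg ^ 2 ≤ Real.pi ^ 2 := sq_le_sq.mpr
    ((abs_arg_le_pi z).trans (le_abs_self _))
  unfold planarBarrier
  linarith

theorem planarBarrier_le (z : ℂ) : planarBarrier z ≤ ‖z‖ ^ (2 / 3 : ℝ) + Real.pi ^ 2 := by
  have hre := re_le_norm (z ^ ((2 / 3 : ℝ) : ℂ))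
  rw [norm_cpow_real] at hre
  unfold planarBarrier
  linarith [sq_nonneg z.arg]

theorem planarBarrier_mul_one_add {z b : ℂ} (hz : z ≠ 0) (harg : |z.arg| ≤ 3 * Real.pi / 4)
    (hb : ‖b‖ ≤ 1 / 4) :
    planarBarrier (z * (1 + b)) =
      (z ^ ((2 / 3 : ℝ) : ℂ) * (1 + b) ^ ((2 / 3 : ℝ) : ℂ)).re +
        (Real.pi ^ 2 - (z.arg + (1 + b).arg) ^ 2) := by
  have hb0 : 1 + b ≠ 0 := fun h => by
    rw [show b = -1 by linear_combination h] at hb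
    norm_num at hb
  have hmem : z.arg + (1 + b).arg ∈ Set.Ioc (-Real.pi) Real.pi := by
    have hlt := abs_lt.mp (abs_arg_one_add_lt hb)
    rw [abs_le] at harg
    constructor <;> linarith
  rw [planarBarrier, arg_mul hz hb0 hmem, cpow_def_of_ne_zero (mul_ne_zero hz hb0),
    cpow_def_of_ne_zero hz, cpow_def_of_ne_zero hb0, log_mul hz hb0 hmem, ← exp_add, add_mul]

theorem rotationSum_planarBarrier_mul_one_add_le {z a : ℂ} (hz : z ≠ 0)
    (harg : |z.arg| ≤ 3 * Real.pi / 4) (ha : ‖a‖ ≤ 1 / 4)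
    (hcpow : ‖z ^ ((2 / 3 : ℝ) : ℂ)‖ *
      ‖rotationSum (fun b => (1 + b) ^ ((2 / 3 : ℝ) : ℂ)) a - 4‖ ≤ ‖a‖ ^ 2 / 4)
    (hlog : 2 * Real.pi * ‖rotationSum (fun b => log (1 + b)) a‖ ≤ ‖a‖ ^ 2 / 4) :
    rotationSum (fun b => planarBarrier (z * (1 + b))) a ≤ 4 * planarBarrier z := by
  set S := rotationSum (fun b => (1 + b) ^ ((2 / 3 : ℝ) : ℂ)) a with hS
  set A := rotationSum (fun b => (1 + b).arg) a with hA
  have hexpand : rotationSum (fun b => planarBarrier (z * (1 + b))) a - 4 * planarBarrier z =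
      (z ^ ((2 / 3 : ℝ) : ℂ) * (S - 4)).re - 2 * z.arg * A -
        rotationSum (fun b => (1 + b).arg ^ 2) a := by
    have hterm (b : ℂ) (hb : ‖b‖ = ‖a‖) := planarBarrier_mul_one_add hz harg (hb.trans_le ha)
    simp only [rotationSum, hterm a rfl, hterm (-a) (by simp), hterm (I * a) (by simp),
      hterm (-(I * a)) (by simp)]
    simp only [hS, hA, rotationSum, planarBarrier, mul_sub, mul_add, add_re, sub_re, mul_re,
      re_ofNat, im_ofNat]
    ring
  have hre : (z ^ ((2 / 3 : ℝ) : ℂ) * (S - 4)).re ≤ ‖a‖ ^ 2 / 4 :=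
    (re_le_norm _).trans ((norm_mul _ _).trans_le hcpow)
  have hAnorm : |A| ≤ ‖rotationSum (fun b => log (1 + b)) a‖ := by
    have him : A = (rotationSum (fun b => log (1 + b)) a).im := by
      simp only [hA, rotationSum, add_im, log_im]
    exact him ▸ abs_im_le_norm _
  have harg_mul : |2 * z.arg * A| ≤ ‖a‖ ^ 2 / 4 := by
    rw [abs_mul, abs_mul, abs_two]
    refine le_trans ?_ hlog
    gcongr
    exact abs_arg_le_pi z
  linarith [half_sq_norm_le_rotationSum_sq_arg ha, neg_abs_le (2 * z.arg * A)]

theorem eventually_rotationSum_planarBarrier_le (b : ℂ) :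
    ∀ᶠ z in cobounded ℂ, |z.arg| ≤ 3 * Real.pi / 4 →
      rotationSum (fun v => planarBarrier (z + v)) b ≤ 4 * planarBarrier z := by
  have hstep : Tendsto (fun z => b / z) (cobounded ℂ) (𝓝 0) := by
    simpa [div_eq_mul_inv] using (tendsto_inv₀_cobounded (α := ℂ)).const_mul b
  have hcpow := hstep.eventually <| eventually_norm_rotationSum_sub_le
    (f := fun w => w ^ ((2 / 3 : ℝ) : ℂ)) (z := 1)
    (AnalyticAt.cpow (by fun_prop) (by fun_prop) one_mem_slitPlane)
    (n := 3) (by norm_num) (ε := 1 / (4 * (‖b‖ + 1))) (by positivity)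
  have hlog := hstep.eventually <| eventually_norm_rotationSum_sub_le (f := log) (z := 1)
    (analyticAt_clog one_mem_slitPlane)
    (n := 2) (by norm_num) (ε := 1 / (8 * Real.pi)) (by positivity)
  have hsmall : ∀ᶠ z in cobounded ℂ, ‖b / z‖ ≤ 1 / 4 :=
    hstep.norm.eventually_le_const (by norm_num)
  filter_upwards [hcpow, hlog, hsmall, eventually_cobounded_le_norm 1]
    with z hcpow hlog hsmall hone harg
  have hz : z ≠ 0 := norm_pos_iff.mp (by linarith)
  simp only [one_cpow, log_one, smul_eq_mul, mul_one, mul_zero, sub_zero] at hcpow hlog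
  rw [rotationSum_add_eq_rotationSum_mul_one_add _ hz]
  refine rotationSum_planarBarrier_mul_one_add_le hz harg hsmall ?_ ?_
  · have hnorm : ‖z ^ ((2 / 3 : ℝ) : ℂ)‖ ≤ ‖z‖ := by
      rw [norm_cpow_real]
      exact Real.rpow_le_self_of_one_le hone (by norm_num)
    have hcancel : ‖z‖ * ‖b / z‖ = ‖b‖ := by rw [← norm_mul, mul_div_cancel₀ _ hz]
    calc _ ≤ ‖z‖ * (1 / (4 * (‖b‖ + 1)) * ‖b / z‖ ^ 3) := by gcongr
      _ = ‖z‖ * ‖b / z‖ / (‖b‖ + 1) * (‖b / z‖ ^ 2 / 4) := by field_simp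
      _ ≤ 1 * (‖b / z‖ ^ 2 / 4) := by
          rw [hcancel]
          gcongr
          exact (div_le_one (by positivity)).mpr (by linarith)
      _ = ‖b / z‖ ^ 2 / 4 := one_mul _
  · calc _ ≤ 2 * Real.pi * (1 / (8 * Real.pi) * ‖b / z‖ ^ 2) := by gcongr
      _ = ‖b / z‖ ^ 2 / 4 := by field_simp; ring

end PlanarBarrier

section LatticeBarrier

open Complex Bornology

/-- The lattice site `x` seen from the apex `(M, M)` in the complex plane, turned by the factor
`-1 + I` so that the diagonal pointing away from the orthant becomes the positive real axis. -/
def planarCoord (M : ℝ) (x : Site 2) : ℂ :=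
  ⟨2 * M - x 0 - x 1, x 0 - x 1⟩

theorem neighborAverage_comp_planarCoord (F : ℂ → ℝ) (M : ℝ) (x : Site 2) :
    neighborAverage 2 (F ∘ planarCoord M) x =
      rotationSum (fun v => F (planarCoord M x + v)) (-1 + I) / 4 := by
  have h₁ : planarCoord M (x + unitVec 2 0) = planarCoord M x + (-1 + I) := by
    apply Complex.ext <;> simp [planarCoord, unitVec] <;> ring
  have h₂ : planarCoord M (x - unitVec 2 0) = planarCoord M x + -(-1 + I) := by
    apply Complex.ext <;> simp [planarCoord, unitVec] <;> ring
  have h₃ : planarCoord M (x + unitVec 2 1) = planarCoord M x + I * (-1 + I) := by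
    apply Complex.ext <;> simp [planarCoord, unitVec] <;> ring
  have h₄ : planarCoord M (x - unitVec 2 1) = planarCoord M x + -(I * (-1 + I)) := by
    apply Complex.ext <;> simp [planarCoord, unitVec] <;> ring
  simp only [neighborAverage_two, rotationSum, Function.comp_apply, h₁, h₂, h₃, h₄]

theorem two_mul_sub_le_re_add_abs_im_planarCoord (M : ℝ) (x : Site 2) (i : Fin 2) :
    2 * (M - x i) ≤ (planarCoord M x).re + |(planarCoord M x).im| := by
  simp only [planarCoord]
  match i with
  | 0 => linarith [neg_abs_le ((x 0 : ℝ) - x 1)]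
  | 1 => linarith [le_abs_self ((x 0 : ℝ) - x 1)]

theorem sub_le_norm_planarCoord (M : ℝ) (x : Site 2) (i : Fin 2) :
    M - x i ≤ ‖planarCoord M x‖ := by
  linarith [two_mul_sub_le_re_add_abs_im_planarCoord M x i, re_le_norm (planarCoord M x),
    abs_im_le_norm (planarCoord M x)]

theorem norm_planarCoord_le {M : ℝ} (hM : 0 ≤ M) {N : ℕ} (hN : 0 < N) {x : Site 2}
    (hx : x ∈ cubeSet 2 N) : ‖planarCoord M x‖ ≤ 4 * (M + 1) * N := by
  have hN1 : (1 : ℝ) ≤ N := by exact_mod_cast hN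
  have hcoord (i : Fin 2) : |(x i : ℝ)| ≤ N := by exact_mod_cast hx i
  have h₀ := abs_le.mp (hcoord 0)
  have h₁ := abs_le.mp (hcoord 1)
  calc ‖planarCoord M x‖ ≤ |2 * M - x 0 - x 1| + |(x 0 : ℝ) - x 1| := norm_le_abs_re_add_abs_im _
    _ ≤ (2 * M + 2 * N) + 2 * N := by
        gcongr <;> rw [abs_le] <;> constructor <;> linarith
    _ ≤ 4 * (M + 1) * N := by nlinarith

theorem exists_neighborAverage_planarBarrier_le :
    ∃ M : ℝ, 0 < M ∧ ∀ x ∉ orthant 2,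
      neighborAverage 2 (planarBarrier ∘ planarCoord M) x ≤ planarBarrier (planarCoord M x) := by
  obtain ⟨R, -, hR⟩ := hasBasis_cobounded_norm.eventually_iff.mp
    (eventually_rotationSum_planarBarrier_le (-1 + I))
  refine ⟨max R 1, by positivity, fun x hx => ?_⟩
  obtain ⟨i, hi⟩ := not_forall.mp hx
  have hi0 : (x i : ℝ) ≤ 0 := by exact_mod_cast (not_le.mp hi).le
  have hnorm : R ≤ ‖planarCoord (max R 1) x‖ := by
    linarith [sub_le_norm_planarCoord (max R 1) x i, le_max_left R 1]
  have harg : |(planarCoord (max R 1) x).arg| ≤ 3 * Real.pi / 4 :=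
    abs_arg_le_of_nonneg_re_add_abs_im <| by
      linarith [two_mul_sub_le_re_add_abs_im_planarCoord (max R 1) x i, le_max_right R 1]
  rw [neighborAverage_comp_planarCoord, div_le_iff₀' four_pos]
  exact hR hnorm harg

theorem le_planarBarrier_planarCoord {M : ℝ} (hM : 0 < M) {N : ℕ} (hN : 0 < N) {x : Site 2}
    (hx : x ∈ cubeSet 2 N) {i : Fin 2} (hi : x i ≤ 0) :
    (4 * (M + 1)) ^ (-(1 / 3) : ℝ) / 2 * (-x i) * (N : ℝ) ^ (-(1 / 3) : ℝ) ≤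
      planarBarrier (planarCoord M x) := by
  have hi0 : (x i : ℝ) ≤ 0 := by exact_mod_cast hi
  have hwedge := two_mul_sub_le_re_add_abs_im_planarCoord M x i
  have hpos : 0 < ‖planarCoord M x‖ := by linarith [sub_le_norm_planarCoord M x i]
  calc (4 * (M + 1)) ^ (-(1 / 3) : ℝ) / 2 * (-x i) * (N : ℝ) ^ (-(1 / 3) : ℝ)
      = 2 * (-x i) / 4 * (4 * (M + 1) * N) ^ (-(1 / 3) : ℝ) := by
        rw [Real.mul_rpow (x := 4 * (M + 1)) (by positivity) N.cast_nonneg]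
        ring
    _ ≤ ((planarCoord M x).re + |(planarCoord M x).im|) / 4 *
          ‖planarCoord M x‖ ^ (-(1 / 3) : ℝ) := by
        refine mul_le_mul (by linarith) ?_ (by positivity) (by linarith)
        exact Real.rpow_le_rpow_of_nonpos hpos (norm_planarCoord_le hM.le hN hx) (by norm_num)
    _ ≤ (planarCoord M x ^ ((2 / 3 : ℝ) : ℂ)).re :=
        quarter_mul_norm_rpow_le_re_cpow (norm_pos_iff.mp hpos) (by linarith)
    _ ≤ planarBarrier (planarCoord M x) := re_cpow_le_planarBarrier _

theorem planarBarrier_planarCoord_le {M : ℝ} (hM : 0 ≤ M) {k : ℕ} (hk : 0 < k) {x : Site 2}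
    (hx : x ∈ cubeSet 2 k) :
    planarBarrier (planarCoord M x) ≤
      ((4 * (M + 1)) ^ (2 / 3 : ℝ) + Real.pi ^ 2) * (k : ℝ) ^ (2 / 3 : ℝ) := by
  have hk1 : 1 ≤ (k : ℝ) ^ (2 / 3 : ℝ) :=
    Real.one_le_rpow (by exact_mod_cast hk) (by norm_num)
  calc planarBarrier (planarCoord M x)
      ≤ ‖planarCoord M x‖ ^ (2 / 3 : ℝ) + Real.pi ^ 2 := planarBarrier_le _
    _ ≤ (4 * (M + 1) * k) ^ (2 / 3 : ℝ) + Real.pi ^ 2 * (k : ℝ) ^ (2 / 3 : ℝ) := by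
        gcongr
        · exact norm_planarCoord_le hM hk hx
        · exact le_mul_of_one_le_right (by positivity) hk1
    _ = ((4 * (M + 1)) ^ (2 / 3 : ℝ) + Real.pi ^ 2) * (k : ℝ) ^ (2 / 3 : ℝ) := by
        rw [Real.mul_rpow (by positivity) (by positivity)]
        ring

theorem exists_superharmonic_barrier :
    ∃ (W : Site 2 → ℝ) (c C : ℝ), 0 < c ∧
      (∀ x ∉ orthant 2, neighborAverage 2 W x ≤ W x) ∧
      (∀ N : ℕ, 0 < N → ∀ x ∈ cubeSet 2 N, ∀ i, x i ≤ 0 →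
        c * (-x i) * (N : ℝ) ^ (-(1 / 3) : ℝ) ≤ W x) ∧
      ∀ k : ℕ, 0 < k → ∀ x ∈ cubeSet 2 k, W x ≤ C * (k : ℝ) ^ (2 / 3 : ℝ) := by
  obtain ⟨M, hM, hsuper⟩ := exists_neighborAverage_planarBarrier_le
  exact ⟨planarBarrier ∘ planarCoord M, _, _, by positivity, hsuper,
    fun _ hN _ hx _ => le_planarBarrier_planarCoord hM hN hx,
    fun _ hk _ => planarBarrier_planarCoord_le hM.le hk⟩

end LatticeBarrier

section PlanarBound

theorem neighborAverage_sq_sub {d : ℕ} (i : Fin d) (a : ℝ) (x : Site d) :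
    neighborAverage d (fun y => (y i - a) ^ 2) x = (x i - a) ^ 2 + 1 / d := by
  have hd : (d : ℝ) ≠ 0 := by exact_mod_cast i.pos.ne'
  have hterm (j : Fin d) :
      (((x + unitVec d j) i : ℝ) - a) ^ 2 + (((x - unitVec d j) i : ℝ) - a) ^ 2 =
        2 * (x i - a) ^ 2 + if i = j then 2 else 0 := by
    by_cases hij : i = j <;> simp [unitVec, hij] <;> ring
  simp only [neighborAverage_apply, hterm, Finset.sum_add_distrib, Finset.sum_const,
    Finset.card_univ, Fintype.card_fin, nsmul_eq_mul, Finset.sum_ite_eq, Finset.mem_univ, if_true]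
  field_simp

theorem neighborAverage_one_add_sq_sub_sq {d : ℕ} [NeZero d] (i j : Fin d) (a b c : ℝ)
    (x : Site d) :
    neighborAverage d (fun y => 1 + c * ((y j - b) ^ 2 - (y i - a) ^ 2)) x =
      1 + c * ((x j - b) ^ 2 - (x i - a) ^ 2) := by
  have hsplit : (fun y : Site d => 1 + c * (((y j : ℝ) - b) ^ 2 - (y i - a) ^ 2)) =
      1 + c • ((fun y : Site d => ((y j : ℝ) - b) ^ 2) - fun y => ((y i : ℝ) - a) ^ 2) := rfl
  rw [hsplit, map_add, map_smul, map_sub]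
  simp only [Pi.add_apply, Pi.smul_apply, Pi.sub_apply, neighborAverage_one,
    neighborAverage_sq_sub, smul_eq_mul]
  ring

theorem orthHarm_le_quadratic {N r : ℕ} (hN : 0 < N) (hr : 2 * N ≤ r + 1) {i j : Fin 2}
    (hij : i ≠ j) {x : Site 2} (hxi : -(N : ℤ) ≤ x i ∧ x i ≤ 0) (hxj : 0 ≤ x j ∧ x j ≤ 2 * N) :
    orthHarm 2 r x ≤ 1 + ((N : ℝ) ^ 2)⁻¹ * ((x j - N) ^ 2 - (x i - -N) ^ 2) := by
  have hcoord (m : Fin 2) : m = i ∨ m = j := by omega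
  let A : Set (Site 2) := {y | (-(N : ℤ) < y i ∧ y i < 0) ∧ 0 < y j ∧ y j < 2 * N}
  let B : Set (Site 2) := {y | (-(N : ℤ) ≤ y i ∧ y i ≤ 0) ∧ 0 ≤ y j ∧ y j ≤ 2 * N}
  have hAcube : A ⊆ cubeSet 2 r \ orthant 2 := fun y ⟨hyi, hyj⟩ => by
    refine ⟨fun m => ?_, fun hy => (hy i).not_gt hyi.2⟩
    rcases hcoord m with rfl | rfl <;> rw [abs_le] <;> omega
  have hAB : ∀ y ∈ A, ∀ m, y + unitVec 2 m ∈ B ∧ y - unitVec 2 m ∈ B := by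
    rintro y ⟨hyi, hyj⟩ m
    simp only [B, Set.mem_ofPred_eq, Pi.add_apply, Pi.sub_apply, unitVec]
    split_ifs <;> omega
  refine le_of_le_neighborAverage_of_neighborAverage_le
    (v := fun y => 1 + ((N : ℝ) ^ 2)⁻¹ * ((y j - N) ^ 2 - (y i - -N) ^ 2))
    ((finite_cubeSet 2 r).subset fun y hy => (hAcube hy).1) hAB
    (fun y hy => (orthHarm_eq_neighborAverage (hAcube hy)).le)
    (fun y _ => (neighborAverage_one_add_sq_sub_sq i j (-N) N _ y).le) ?_ x ⟨hxi, hxj⟩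
  rintro y ⟨⟨hyi, hyj⟩, hyA⟩
  have hN0 : (N : ℝ) ≠ 0 := by exact_mod_cast hN.ne'
  by_cases hyi0 : y i = 0
  · have hyQ : y ∈ orthant 2 := fun m => by rcases hcoord m with rfl | rfl <;> omega
    calc orthHarm 2 r y = 0 := orthHarm_eq_zero_of_mem_orthant hyQ
      _ ≤ ((N : ℝ) ^ 2)⁻¹ * (y j - N) ^ 2 := by positivity
      _ = _ := by rw [hyi0]; push_cast; field_simp; ring
  have hsq : |y i + N| ≤ |y j - N| := by
    have hside : y i = -N ∨ y j = 0 ∨ y j = 2 * N := by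
      by_contra! hne
      exact hyA ⟨by omega, by omega⟩
    rw [abs_of_nonneg (by omega), le_abs]
    omega
  have hsq' : ((y i : ℝ) - -N) ^ 2 ≤ (y j - N) ^ 2 := by
    rw [sub_neg_eq_add]
    exact_mod_cast sq_le_sq.mpr hsq
  exact (orthHarm_le_one y).trans (le_add_of_nonneg_right
    (mul_nonneg (by positivity) (sub_nonneg.mpr hsq')))

theorem one_le_two_mul_div {N : ℕ} (hN : 0 < N) {m : ℤ} (hm : N ≤ m) :
    (1 : ℝ) ≤ 2 * m / N := by
  have hN0 : (0 : ℝ) < N := by exact_mod_cast hN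
  have hmN : (N : ℝ) ≤ m := by exact_mod_cast hm
  rw [le_div_iff₀ hN0]
  linarith

theorem orthHarm_le_linear {N r : ℕ} (hN : 0 < N) (hr : 2 * N ≤ r + 1) {i j : Fin 2}
    (hij : i ≠ j) {x : Site 2} (hxi : x i ≤ 0) (hxj : x j = N) :
    orthHarm 2 r x ≤ 2 * (-x i) / N := by
  rcases le_or_gt (x i) (-N) with hfar | hnear
  · exact (orthHarm_le_one x).trans (by exact_mod_cast one_le_two_mul_div hN (le_neg.mpr hfar))
  have hN0 : (N : ℝ) ≠ 0 := by exact_mod_cast hN.ne'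
  calc orthHarm 2 r x ≤ 1 + ((N : ℝ) ^ 2)⁻¹ * ((x j - N) ^ 2 - (x i - -N) ^ 2) :=
        orthHarm_le_quadratic hN hr hij ⟨hnear.le, hxi⟩ (by omega)
    _ = 2 * (-x i) / N - (x i / N) ^ 2 := by rw [hxj]; push_cast; field_simp; ring
    _ ≤ 2 * (-x i) / N := sub_le_self _ (sq_nonneg _)

theorem exists_orthHarm_le_linear {N r : ℕ} (hN : 0 < N) (hr : 2 * N ≤ r + 1) {x : Site 2}
    (hneg : ∃ i, x i ≤ 0) (hbdry : x ∈ orthant 2 ∨ ∃ j, |x j| = N) :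
    ∃ i, x i ≤ 0 ∧ orthHarm 2 r x ≤ 2 * (-x i) / N := by
  obtain ⟨i, hi⟩ := hneg
  have hi0 : (x i : ℝ) ≤ 0 := by exact_mod_cast hi
  rcases hbdry with hQ | ⟨j, hj⟩
  · refine ⟨i, hi, (orthHarm_eq_zero_of_mem_orthant hQ).trans_le ?_⟩
    exact div_nonneg (by linarith) N.cast_nonneg
  rcases (abs_eq N.cast_nonneg).mp hj with hj | hj
  · have hij : i ≠ j := by
      rintro rfl
      omega
    exact ⟨i, hi, orthHarm_le_linear hN hr hij hi hj⟩
  · exact ⟨j, by omega, (orthHarm_le_one x).trans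
      (by exact_mod_cast one_le_two_mul_div hN (le_neg.mpr hj.le))⟩

theorem two_mul_div_eq_mul_rpow {c t : ℝ} (hc : c ≠ 0) (ht : 0 < t) (s : ℝ) :
    2 * s / t = 2 / c * t ^ (-(2 / 3) : ℝ) * (c * s * t ^ (-(1 / 3) : ℝ)) := by
  have hpow : t ^ (-(2 / 3) : ℝ) * t ^ (-(1 / 3) : ℝ) = t⁻¹ := by
    rw [← Real.rpow_add ht, ← Real.rpow_neg_one]
    norm_num
  rw [div_eq_mul_inv, ← hpow]
  field_simp

-- The barrier dominates `h_r` on the L-shaped region, since on its boundary `h_r` grows at most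
-- linearly in the distance to the orthant.
theorem orthHarm_le_mul_barrier {W : Site 2 → ℝ} {c : ℝ} (hc : 0 < c) {N r : ℕ} (hN : 0 < N)
    (hr : 2 * N ≤ r + 1) (hsuper : ∀ x ∉ orthant 2, neighborAverage 2 W x ≤ W x)
    (hlower : ∀ x ∈ cubeSet 2 N, ∀ i, x i ≤ 0 → c * (-x i) * (N : ℝ) ^ (-(1 / 3) : ℝ) ≤ W x)
    {x : Site 2} (hx : x ∈ cubeSet 2 N) (hneg : ∃ i, x i ≤ 0) :
    orthHarm 2 r x ≤ 2 / c * (N : ℝ) ^ (-(2 / 3) : ℝ) * W x := by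
  set D := 2 / c * (N : ℝ) ^ (-(2 / 3) : ℝ)
  let A : Set (Site 2) := {y | (∀ m, |y m| < N) ∧ y ∉ orthant 2}
  let B : Set (Site 2) := {y | y ∈ cubeSet 2 N ∧ ∃ i, y i ≤ 0}
  have hAcube : A ⊆ cubeSet 2 r \ orthant 2 := fun y hy =>
    ⟨fun m => by have := hy.1 m; omega, hy.2⟩
  have hAB : ∀ y ∈ A, ∀ m, y + unitVec 2 m ∈ B ∧ y - unitVec 2 m ∈ B := by
    rintro y ⟨hyN, hyQ⟩ m
    obtain ⟨i, hi⟩ := not_forall.mp hyQ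
    refine ⟨⟨fun l => ?_, i, ?_⟩, ⟨fun l => ?_, i, ?_⟩⟩ <;>
      simp only [Pi.add_apply, Pi.sub_apply, unitVec] <;> grind
  refine le_of_le_neighborAverage_of_neighborAverage_le (v := D • W)
    ((finite_cubeSet 2 r).subset fun y hy => (hAcube hy).1) hAB
    (fun y hy => (orthHarm_eq_neighborAverage (hAcube hy)).le) (fun y hy => ?_)
    (fun y ⟨⟨hyN, hyneg⟩, hyA⟩ => ?_) x ⟨hx, hneg⟩
  · rw [map_smul]
    exact mul_le_mul_of_nonneg_left (hsuper y hy.2) (by positivity)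
  · have hbdry : y ∈ orthant 2 ∨ ∃ j, |y j| = N := by
      by_contra! hint
      exact hyA ⟨fun m => (hyN m).lt_of_ne (hint.2 m), hint.1⟩
    obtain ⟨i, hi, hle⟩ := exists_orthHarm_le_linear hN hr hyneg hbdry
    rw [two_mul_div_eq_mul_rpow hc.ne' (by exact_mod_cast hN)] at hle
    exact hle.trans (mul_le_mul_of_nonneg_left (hlower y hyN i hi) (by positivity))

theorem exists_orthHarm_le_rpow :
    ∃ C : ℝ, 1 ≤ C ∧ ∀ k N r : ℕ, 0 < N → 2 * N ≤ r + 1 → ∀ x ∈ cubeSet 2 k,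
      orthHarm 2 r x ≤ C * ((k : ℝ) / N) ^ (2 / 3 : ℝ) := by
  obtain ⟨W, c, C, hc, hsuper, hlower, hupper⟩ := exists_superharmonic_barrier
  refine ⟨max 1 (2 / c * C), le_max_left _ _, fun k N r hN hr x hx => ?_⟩
  have hN0 : (0 : ℝ) < N := by exact_mod_cast hN
  by_cases hQ : x ∈ orthant 2
  · rw [orthHarm_eq_zero_of_mem_orthant hQ]
    positivity
  rcases le_or_gt N k with hNk | hkN
  · have hratio : 1 ≤ (k : ℝ) / N := (one_le_div hN0).mpr (by exact_mod_cast hNk)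
    exact (orthHarm_le_one x).trans
      (one_le_mul_of_one_le_of_one_le (le_max_left _ _) (Real.one_le_rpow hratio (by norm_num)))
  obtain ⟨i, hi⟩ := not_forall.mp hQ
  have hk : 0 < k := by have := abs_le.mp (hx i); omega
  have hxN : x ∈ cubeSet 2 N := fun m => (hx m).trans (by exact_mod_cast hkN.le)
  calc orthHarm 2 r x ≤ 2 / c * (N : ℝ) ^ (-(2 / 3) : ℝ) * W x :=
        orthHarm_le_mul_barrier hc hN hr hsuper (hlower N hN) hxN ⟨i, (not_le.mp hi).le⟩
    _ ≤ 2 / c * (N : ℝ) ^ (-(2 / 3) : ℝ) * (C * (k : ℝ) ^ (2 / 3 : ℝ)) := by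
        gcongr
        exact hupper k hk x hx
    _ = 2 / c * C * ((k : ℝ) / N) ^ (2 / 3 : ℝ) := by
        rw [Real.div_rpow k.cast_nonneg hN0.le, Real.rpow_neg hN0.le]
        ring
    _ ≤ max 1 (2 / c * C) * ((k : ℝ) / N) ^ (2 / 3 : ℝ) := by
        gcongr
        exact le_max_right _ _

theorem pkr_le {d k r : ℕ} {b : ℝ} (h : ∀ x ∈ cubeSet d k, orthHarm d r x ≤ b) :
    pkr d k r ≤ b := by
  refine csSup_le ⟨_, 0, fun i => by simp, rfl⟩ ?_
  rintro _ ⟨x, hx, rfl⟩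
  exact h x hx

theorem div_le_add_mul_log_div_sub_mul_log {a : ℝ} (ha : 0 ≤ a) {k r : ℕ}
    (hr : 0 < r - a * Real.log r) :
    (k : ℝ) / r ≤ (k + a * Real.log r) / (r - a * Real.log r) := by
  have hlog : 0 ≤ a * Real.log r := mul_nonneg ha (Real.log_natCast_nonneg r)
  exact div_le_div₀ (by positivity) (by linarith) hr (by linarith)

end PlanarBound

theorem lemma_planarcase_general :
    ∃ c : ℝ, 0 < c ∧ ∀ k r : ℕ, 0 < r → pkr 2 k r ≤ c * ((k : ℝ) / r) ^ ((2 : ℝ) / 3) := by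
  obtain ⟨C, hC, hbound⟩ := exists_orthHarm_le_rpow
  refine ⟨C * 2 ^ (2 / 3 : ℝ), by positivity, fun k r hr => pkr_le fun x hx => ?_⟩
  obtain ⟨N, hN⟩ : ∃ N, N = (r + 1) / 2 := ⟨_, rfl⟩
  have hr0 : (0 : ℝ) < r := by exact_mod_cast hr
  have hN0 : (0 : ℝ) < N := by exact_mod_cast (show 0 < N by omega)
  have hrN : (r : ℝ) ≤ 2 * N := by exact_mod_cast (show r ≤ 2 * N by omega)
  have hratio : (k : ℝ) / N ≤ 2 * (k / r) := by
    rw [mul_div_assoc', div_le_div_iff₀ hN0 hr0]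
    nlinarith [k.cast_nonneg (α := ℝ)]
  calc orthHarm 2 r x ≤ C * ((k : ℝ) / N) ^ (2 / 3 : ℝ) :=
        hbound k N r (by omega) (by omega) x hx
    _ ≤ C * (2 * (k / r)) ^ (2 / 3 : ℝ) := by gcongr
    _ = C * 2 ^ (2 / 3 : ℝ) * (k / r) ^ (2 / 3 : ℝ) := by
        rw [Real.mul_rpow two_pos.le (by positivity), mul_assoc]

theorem lemma_planarcase :
    ∃ a c : ℝ, 0 < a ∧ 0 < c ∧ ∀ k r : ℕ, 1 ≤ k → k ≤ r →
      0 < (r : ℝ) - a * Real.log r →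
      pkr 2 k r ≤ c * (((k : ℝ) + a * Real.log r) / ((r : ℝ) - a * Real.log r)) ^ ((2 : ℝ) / 3) := by
  obtain ⟨c, hc, hbound⟩ := lemma_planarcase_general
  refine ⟨1, c, one_pos, hc, fun k r hk hkr hr => (hbound k r (hk.trans hkr)).trans ?_⟩
  exact mul_le_mul_of_nonneg_left (Real.rpow_le_rpow (by positivity)
    (div_le_add_mul_log_div_sub_mul_log zero_le_one hr) (by norm_num)) hc.le

end RotorRouterPaper
end
end

section
/- For every d ≥ 1 there exist constants c, C > 0 depending only on d such that for every n ≥ 1 and every finite set A ⊆ ℤ^d with |A| = n, ψ(A) − ψ(B_n) ≥ c |A Δ B_n|² n^{−1 + 2/d} − C n^{1 + 1/d}, where A Δ B_n denotes the symmetric difference. -/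
open scoped BigOperators Pointwise symmDiff
open MeasureTheory Filter

noncomputable section
open scoped Classical
namespace RotorRouterPaper

/-!
Let `R` be the radius with `ω_d R ^ d = n`, so that `B_n = {‖x‖ < R}`. As `‖x‖² - R²` is negative
exactly on `B_n`, its sums over `A` and `B_n` differ by `∑_{x ∈ A Δ B_n} |‖x‖² - R²|`, and therefore
`ψ(A) - ψ(B_n)` is this sum plus `R² (|A| - |B_n|)`.

Assigning a unit cell to every lattice point compares lattice point counts with volumes: `|B_n|`
exceeds `n` by `O(R ^ (d - 1))`, and the shell `|‖x‖ - R| ≤ δ` has `O(R ^ (d - 1) (δ + 1))` points.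
For `δ` a small multiple of `|A Δ B_n| / R ^ (d - 1)` the shell thus misses about half of `A Δ B_n`,
and each of the missed points contributes at least `δ R` to the sum.
-/

section FiniteSums

variable {ι α : Type*} [CommRing α] [LinearOrder α] [IsStrictOrderedRing α]

lemma sum_sub_sum_eq_sum_symmDiff_abs_sub [DecidableEq ι] {A B : Finset ι} {f : ι → α} {t : α}
    (hle : ∀ x ∈ B, f x ≤ t) (hge : ∀ x ∉ B, t ≤ f x) :
    ∑ x ∈ A, f x - ∑ x ∈ B, f x = ∑ x ∈ A ∆ B, |f x - t| + t * ((A.card : α) - B.card) := by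
  have hAB : ∑ x ∈ A \ B, |f x - t| = ∑ x ∈ A \ B, (f x - t) :=
    Finset.sum_congr rfl fun x hx =>
      abs_of_nonneg (sub_nonneg.2 (hge x (Finset.mem_sdiff.1 hx).2))
  have hBA : ∑ x ∈ B \ A, |f x - t| = -∑ x ∈ B \ A, (f x - t) := by
    rw [← Finset.sum_neg_distrib]
    exact Finset.sum_congr rfl fun x hx =>
      abs_of_nonpos (sub_nonpos.2 (hle x (Finset.mem_sdiff.1 hx).1))
  have hsymm : ∑ x ∈ A ∆ B, |f x - t| = ∑ x ∈ A, (f x - t) - ∑ x ∈ B, (f x - t) := by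
    rw [symmDiff_def, Finset.sup_eq_union, Finset.sum_union disjoint_sdiff_sdiff, hAB, hBA,
      ← sub_eq_add_neg, Finset.sum_sdiff_sub_sum_sdiff]
  rw [hsymm]
  simp only [Finset.sum_sub_distrib, Finset.sum_const, nsmul_eq_mul]
  ring

lemma mul_card_sub_card_filter_le_sum {S : Finset ι} {f : ι → α} (hf : ∀ x ∈ S, 0 ≤ f x) (t : α) :
    t * (S.card - {x ∈ S | f x ≤ t}.card) ≤ ∑ x ∈ S, f x := by
  have hcard : ({x ∈ S | f x ≤ t}.card : α) + {x ∈ S | ¬ f x ≤ t}.card = S.card := by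
    exact_mod_cast Finset.card_filter_add_card_filter_not _
  calc t * (S.card - {x ∈ S | f x ≤ t}.card) = {x ∈ S | ¬ f x ≤ t}.card • t := by
        rw [← hcard, nsmul_eq_mul]; ring
    _ ≤ ∑ x ∈ S with ¬ f x ≤ t, f x :=
        Finset.card_nsmul_le_sum _ _ _ fun x hx => (not_le.1 (Finset.mem_filter.1 hx).2).le
    _ ≤ ∑ x ∈ S, f x :=
        Finset.sum_le_sum_of_subset_of_nonneg (Finset.filter_subset _ _) fun x hx _ => hf x hx

lemma sq_card_div_sub_le_sum {𝕜 : Type*} [Field 𝕜] [LinearOrder 𝕜] [IsStrictOrderedRing 𝕜]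
    {S : Finset ι} {f : ι → 𝕜} {k κ ρ : 𝕜} (hk : 0 < k) (hf : ∀ x ∈ S, 0 ≤ f x)
    (hS : S.card ≤ 2 * k * ρ)
    (hcount : ∀ δ, 0 ≤ δ → δ ≤ ρ → {x ∈ S | f x ≤ δ}.card ≤ k * (δ + κ)) :
    (S.card : 𝕜) ^ 2 / (4 * k) - κ * S.card / 2 ≤ ∑ x ∈ S, f x := by
  -- Up to the lower order term in `κ`, this `δ` maximizes the bound `δ * (|S| - k * (δ + κ))`.
  set δ : 𝕜 := S.card / (2 * k) with hδ
  have hδ0 : 0 ≤ δ := by positivity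
  have hδρ : δ ≤ ρ := (div_le_iff₀' (by positivity)).2 hS
  calc (S.card : 𝕜) ^ 2 / (4 * k) - κ * S.card / 2 = δ * (S.card - k * (δ + κ)) := by
        rw [hδ]; field_simp; ring
    _ ≤ δ * (S.card - {x ∈ S | f x ≤ δ}.card) := by gcongr; exact hcount δ hδ0 hδρ
    _ ≤ ∑ x ∈ S, f x := mul_card_sub_card_filter_le_sum hf δ

end FiniteSums

lemma pow_sub_pow_le_mul_sub {α : Type*} [CommRing α] [LinearOrder α] [IsOrderedRing α] {a b : α}
    (ha : 0 ≤ a) (hab : a ≤ b) (n : ℕ) :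
    b ^ n - a ^ n ≤ n * b ^ (n - 1) * (b - a) := by
  have h := (le_abs_self _).trans (abs_pow_sub_pow_le b a n)
  rw [abs_of_nonneg (sub_nonneg.2 hab), abs_of_nonneg ha, abs_of_nonneg (ha.trans hab),
    max_eq_left hab] at h
  rwa [mul_assoc, mul_comm] at h

section Norm

variable {d : ℕ}

lemma enorm_nonneg (x : Site d) : 0 ≤ enorm x := Real.sqrt_nonneg _

lemma enorm_sq (x : Site d) : enorm x ^ 2 = nsq x := Real.sq_sqrt (nsq_nonneg x)

lemma enorm_eq_norm_toLp (x : Site d) :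
    enorm x = ‖(WithLp.toLp 2 fun i => (x i : ℝ) : EuclideanSpace ℝ (Fin d))‖ := by
  simp [EuclideanSpace.norm_eq, enorm, nsq]

lemma norm_le_enorm (x : Site d) : ‖x‖ ≤ enorm x := by
  refine (pi_norm_le_iff_of_nonneg (enorm_nonneg x)).2 fun i => ?_
  rw [enorm_eq_norm_toLp, ← Int.norm_cast_real]
  exact PiLp.norm_apply_le (WithLp.toLp 2 fun i => (x i : ℝ) : EuclideanSpace ℝ (Fin d)) i

lemma finite_setOf_enorm_lt (r : ℝ) : {x : Site d | enorm x < r}.Finite := by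
  refine ((isCompact_closedBall (0 : Site d) r).finite_of_discrete).subset fun x hx => ?_
  exact mem_closedBall_zero_iff.2 ((norm_le_enorm x).trans (le_of_lt hx))

/-- The open Euclidean ball of radius `r` about the origin of `ℤ^d`; unlike `lball`, which is
indexed by the volume of the ball, it is indexed by the radius. -/
def siteBall (d : ℕ) (r : ℝ) : Finset (Site d) := (finite_setOf_enorm_lt r).toFinset

lemma mem_siteBall {r : ℝ} {x : Site d} : x ∈ siteBall d r ↔ enorm x < r := by
  simp [siteBall]

lemma mul_abs_enorm_sub_le {R : ℝ} (hR : 0 ≤ R) (x : Site d) :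
    R * |enorm x - R| ≤ |nsq x - R ^ 2| := by
  have hx := enorm_nonneg x
  rw [← enorm_sq, sq_sub_sq, abs_mul, abs_of_nonneg (by positivity : 0 ≤ enorm x + R)]
  gcongr
  linarith

lemma psi_sub_psi_siteBall (A : Finset (Site d)) {R : ℝ} (hR : 0 ≤ R) :
    psi (A : Set (Site d)) - psi (siteBall d R : Set (Site d))
      = ∑ x ∈ A ∆ siteBall d R, |nsq x - R ^ 2| + R ^ 2 * ((A.card : ℝ) - (siteBall d R).card) := by
  have hnsq (x : Site d) : nsq x < R ^ 2 ↔ x ∈ siteBall d R := by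
    rw [mem_siteBall, ← enorm_sq, sq_lt_sq₀ (enorm_nonneg x) hR]
  simp only [psi, finsum_mem_coe_finset]
  exact sum_sub_sum_eq_sum_symmDiff_abs_sub (fun x hx => ((hnsq x).2 hx).le)
    fun x hx => not_lt.1 (mt (hnsq x).1 hx)

end Norm

section LatticePointCount

variable {d : ℕ}

/-- The coordinatewise floor. Its fibres are half-open unit cubes, the cells assigned to the
lattice points when their number is compared with a volume. -/
def siteFloor (z : EuclideanSpace ℝ (Fin d)) : Site d := fun i => ⌊z i⌋

lemma siteFloor_preimage_singleton (x : Site d) :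
    siteFloor ⁻¹' {x} = WithLp.ofLp ⁻¹' Set.univ.pi fun i => Set.Ico (x i : ℝ) (x i + 1) := by
  ext z
  simp [siteFloor, funext_iff, Int.floor_eq_iff]

lemma measurableSet_siteFloor_preimage_singleton (x : Site d) :
    MeasurableSet (siteFloor ⁻¹' {x}) := by
  rw [siteFloor_preimage_singleton]
  exact (PiLp.volume_preserving_ofLp (Fin d)).measurable
    (MeasurableSet.univ_pi fun _ => measurableSet_Ico)

lemma volume_siteFloor_preimage_singleton (x : Site d) : volume (siteFloor ⁻¹' {x}) = 1 := by
  rw [siteFloor_preimage_singleton, (PiLp.volume_preserving_ofLp (Fin d)).measure_preimage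
    (MeasurableSet.univ_pi fun _ => measurableSet_Ico).nullMeasurableSet, volume_pi_pi]
  simp

lemma volume_siteFloor_preimage (T : Finset (Site d)) :
    volume (siteFloor ⁻¹' (T : Set (Site d))) = T.card := by
  rw [← sum_measure_preimage_singleton T fun x _ => measurableSet_siteFloor_preimage_singleton x]
  simp [volume_siteFloor_preimage_singleton]

lemma abs_norm_sub_enorm_siteFloor_le (z : EuclideanSpace ℝ (Fin d)) :
    |‖z‖ - enorm (siteFloor z)| ≤ √d := by
  rw [enorm_eq_norm_toLp]
  refine (abs_norm_sub_norm_le _ _).trans ?_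
  rw [EuclideanSpace.norm_eq]
  refine Real.sqrt_le_sqrt ?_
  calc ∑ i, ‖(z - WithLp.toLp 2 fun i => (siteFloor z i : ℝ)) i‖ ^ 2
      = ∑ i, Int.fract (z i) ^ 2 := by simp [siteFloor]
    _ ≤ ∑ _i : Fin d, (1 : ℝ) := Finset.sum_le_sum fun i _ =>
        pow_le_one₀ (Int.fract_nonneg _) (Int.fract_lt_one _).le
    _ = d := by simp

lemma ballVol_pos (d : ℕ) : 0 < ballVol d :=
  ENNReal.toReal_pos (Metric.measure_ball_pos _ _ one_pos).ne' measure_ball_lt_top.ne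

lemma volume_real_closedBall_zero {r : ℝ} (hr : 0 ≤ r) :
    volume.real (Metric.closedBall (0 : EuclideanSpace ℝ (Fin d)) r) = ballVol d * r ^ d := by
  rw [Measure.addHaar_real_closedBall _ _ hr, finrank_euclideanSpace_fin, mul_comm]
  rfl

lemma card_le_of_enorm_le {T : Finset (Site d)} {r : ℝ} (hr : 0 ≤ r) (hT : ∀ x ∈ T, enorm x ≤ r) :
    T.card ≤ ballVol d * (r + √d) ^ d := by
  have hsub : siteFloor ⁻¹' (T : Set (Site d)) ⊆ Metric.closedBall 0 (r + √d) := fun z hz => by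
    have hz' := (abs_le.1 (abs_norm_sub_enorm_siteFloor_le z)).2
    exact mem_closedBall_zero_iff.2 (by linarith [hT _ hz])
  calc (T.card : ℝ) = volume.real (siteFloor ⁻¹' (T : Set (Site d))) := by
        simp [measureReal_def, volume_siteFloor_preimage]
    _ ≤ volume.real (Metric.closedBall (0 : EuclideanSpace ℝ (Fin d)) (r + √d)) :=
        measureReal_mono hsub measure_closedBall_lt_top.ne
    _ = ballVol d * (r + √d) ^ d := volume_real_closedBall_zero (by positivity)

lemma card_siteBall_le {r : ℝ} (hr : 0 ≤ r) : (siteBall d r).card ≤ ballVol d * (r + √d) ^ d :=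
  card_le_of_enorm_le hr fun _ hx => (mem_siteBall.1 hx).le

variable [NeZero d]

lemma le_card_siteBall (r : ℝ) : ballVol d * max 0 (r - √d) ^ d ≤ (siteBall d r).card := by
  have hsub : Metric.ball 0 (max 0 (r - √d)) ⊆ siteFloor ⁻¹' (siteBall d r : Set (Site d)) := by
    intro z hz
    have hz' := (abs_le.1 (abs_norm_sub_enorm_siteFloor_le z)).1
    have hlt := (lt_max_iff.1 (mem_ball_zero_iff.1 hz)).resolve_left (norm_nonneg z).not_gt
    exact mem_siteBall.2 (by linarith)
  have hvol := volume_siteFloor_preimage (siteBall d r)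
  calc ballVol d * max 0 (r - √d) ^ d
      = volume.real (Metric.ball (0 : EuclideanSpace ℝ (Fin d)) (max 0 (r - √d))) := by
        rw [← Measure.addHaar_real_closedBall_eq_addHaar_real_ball,
          volume_real_closedBall_zero (le_max_left _ _)]
    _ ≤ volume.real (siteFloor ⁻¹' (siteBall d r : Set (Site d))) :=
        measureReal_mono hsub (by simp [hvol])
    _ = (siteBall d r).card := by simp [measureReal_def, hvol]

lemma card_le_of_enorm_mem_Icc {T : Finset (Site d)} {a b : ℝ} (hb : 0 ≤ b) (hab : a ≤ b)
    (hT : ∀ x ∈ T, enorm x ∈ Set.Icc a b) :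
    T.card ≤ ballVol d * (d * (b + √d) ^ (d - 1) * (b - a + 2 * √d)) := by
  have hω := ballVol_pos d
  have hκ := Real.sqrt_nonneg (d : ℝ)
  have hdisj : Disjoint T (siteBall d a) := Finset.disjoint_left.2 fun x hx hx' =>
    (hT x hx).1.not_gt (mem_siteBall.1 hx')
  have houter : ((T ∪ siteBall d a).card : ℝ) ≤ ballVol d * (b + √d) ^ d := by
    refine card_le_of_enorm_le hb fun x hx => ?_
    rcases Finset.mem_union.1 hx with hx | hx
    · exact (hT x hx).2
    · exact (mem_siteBall.1 hx).le.trans hab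
  rw [Finset.card_union_of_disjoint hdisj, Nat.cast_add] at houter
  calc (T.card : ℝ) ≤ ballVol d * ((b + √d) ^ d - max 0 (a - √d) ^ d) := by
        linarith [le_card_siteBall (d := d) a]
    _ ≤ ballVol d * (d * (b + √d) ^ (d - 1) * (b + √d - max 0 (a - √d))) := by
        gcongr
        exact pow_sub_pow_le_mul_sub (le_max_left _ _) (max_le (by positivity) (by linarith)) d
    _ ≤ ballVol d * (d * (b + √d) ^ (d - 1) * (b - a + 2 * √d)) := by
        gcongr
        linarith [le_max_right 0 (a - √d)]

end LatticePointCount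

section SymmDiff

variable {d : ℕ} {R : ℝ}

lemma card_siteBall_sub_le (hR : 0 ≤ R) :
    (siteBall d R).card - ballVol d * R ^ d ≤ ballVol d * d * √d * (R + √d) ^ (d - 1) := by
  have hpow := pow_sub_pow_le_mul_sub hR (le_add_of_nonneg_right (Real.sqrt_nonneg d)) d
  have := mul_le_mul_of_nonneg_left hpow (ballVol_pos d).le
  linarith [card_siteBall_le (d := d) hR]

lemma card_symmDiff_siteBall_le (hR : 0 ≤ R) {A : Finset (Site d)}
    (hA : A.card ≤ ballVol d * R ^ d) :
    (A ∆ siteBall d R).card ≤ 2 * ballVol d * (R + √d) ^ d := by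
  have hω := ballVol_pos d
  have hcard : (A ∆ siteBall d R).card ≤ A.card + (siteBall d R).card :=
    (Finset.card_le_card symmDiff_le_sup).trans (Finset.card_union_le _ _)
  have hpow : ballVol d * R ^ d ≤ ballVol d * (R + √d) ^ d := by
    gcongr
    exact le_add_of_nonneg_right (Real.sqrt_nonneg _)
  calc ((A ∆ siteBall d R).card : ℝ) ≤ A.card + (siteBall d R).card := mod_cast hcard
    _ ≤ 2 * ballVol d * (R + √d) ^ d := by linarith [card_siteBall_le (d := d) hR]

variable [NeZero d]

lemma card_shell_le {T : Finset (Site d)} {δ : ℝ} (hR : 0 ≤ R) (hδ : 0 ≤ δ) (hδR : δ ≤ R + √d)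
    (hT : ∀ x ∈ T, |enorm x - R| ≤ δ) :
    T.card ≤ ballVol d * d * 2 ^ d * (R + √d) ^ (d - 1) * (δ + √d) := by
  have hω := ballVol_pos d
  have hIcc : ∀ x ∈ T, enorm x ∈ Set.Icc (R - δ) (R + δ) := fun x hx =>
    Set.mem_Icc_iff_abs_le.1 ((abs_sub_comm _ _).trans_le (hT x hx))
  calc (T.card : ℝ)
      ≤ ballVol d * (d * (R + δ + √d) ^ (d - 1) * (R + δ - (R - δ) + 2 * √d)) :=
        card_le_of_enorm_mem_Icc (by positivity) (by linarith) hIcc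
    _ ≤ ballVol d * (d * (2 * (R + √d)) ^ (d - 1) * (R + δ - (R - δ) + 2 * √d)) := by
        gcongr
        · linarith [Real.sqrt_nonneg (d : ℝ)]
        · linarith
    _ = ballVol d * d * 2 ^ d * (R + √d) ^ (d - 1) * (δ + √d) := by
        rw [mul_pow, ← pow_sub_one_mul (NeZero.ne d) (2 : ℝ)]
        ring

lemma sq_card_symmDiff_siteBall_le_sum (hR : 0 ≤ R) {A : Finset (Site d)}
    (hA : A.card ≤ ballVol d * R ^ d) :
    (A ∆ siteBall d R).card ^ 2 / (4 * (ballVol d * d * 2 ^ d * (R + √d) ^ (d - 1)))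
        - ballVol d * √d * (R + √d) ^ d
      ≤ ∑ x ∈ A ∆ siteBall d R, |enorm x - R| := by
  have hω := ballVol_pos d
  have hd : (1 : ℝ) ≤ d := mod_cast NeZero.one_le
  have hk : 0 < ballVol d * d * 2 ^ d * (R + √d) ^ (d - 1) := by positivity
  have hcard := card_symmDiff_siteBall_le hR hA
  have hcard' : (A ∆ siteBall d R).card
      ≤ 2 * (ballVol d * d * 2 ^ d * (R + √d) ^ (d - 1)) * (R + √d) := by
    have hone : 1 ≤ (d : ℝ) * 2 ^ d := one_le_mul_of_one_le_of_one_le hd (one_le_pow₀ one_le_two)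
    calc ((A ∆ siteBall d R).card : ℝ) ≤ 2 * ballVol d * (R + √d) ^ d := hcard
      _ ≤ 2 * ballVol d * (R + √d) ^ d * (d * 2 ^ d) := le_mul_of_one_le_right (by positivity) hone
      _ = 2 * (ballVol d * d * 2 ^ d * (R + √d) ^ (d - 1)) * (R + √d) := by
          rw [← pow_sub_one_mul (NeZero.ne d) (R + √d)]
          ring
  have hsum := sq_card_div_sub_le_sum (f := fun x => |enorm x - R|) hk (fun x _ => abs_nonneg _)
    hcard' fun δ hδ hδR => card_shell_le hR hδ hδR fun x hx => (Finset.mem_filter.1 hx).2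
  have := mul_le_mul_of_nonneg_left hcard (Real.sqrt_nonneg (d : ℝ))
  linarith

theorem psi_sub_psi_siteBall_ge (hR : 0 ≤ R) {A : Finset (Site d)}
    (hA : A.card = ballVol d * R ^ d) :
    R * ((A ∆ siteBall d R).card ^ 2 / (4 * (ballVol d * d * 2 ^ d * (R + √d) ^ (d - 1))))
        - (d + 1) * ballVol d * √d * (R + √d) ^ (d + 1)
      ≤ psi (A : Set (Site d)) - psi (siteBall d R : Set (Site d)) := by
  have hω := ballVol_pos d
  have hκ := Real.sqrt_nonneg (d : ℝ)
  have hsum : R * ∑ x ∈ A ∆ siteBall d R, |enorm x - R|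
      ≤ ∑ x ∈ A ∆ siteBall d R, |nsq x - R ^ 2| := by
    rw [Finset.mul_sum]
    exact Finset.sum_le_sum fun x _ => mul_abs_enorm_sub_le hR x
  have hmain := mul_le_mul_of_nonneg_left (sq_card_symmDiff_siteBall_le_sum hR hA.le) hR
  have hmain_error :
      R * (ballVol d * √d * (R + √d) ^ d) ≤ ballVol d * √d * (R + √d) ^ (d + 1) := by
    calc R * (ballVol d * √d * (R + √d) ^ d) ≤ (R + √d) * (ballVol d * √d * (R + √d) ^ d) := by
          gcongr
          linarith
      _ = ballVol d * √d * (R + √d) ^ (d + 1) := by ring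
  have hcard_error : R ^ 2 * ((siteBall d R).card - ballVol d * R ^ d)
      ≤ d * ballVol d * √d * (R + √d) ^ (d + 1) := by
    calc R ^ 2 * ((siteBall d R).card - ballVol d * R ^ d)
        ≤ R ^ 2 * (ballVol d * d * √d * (R + √d) ^ (d - 1)) := by
          gcongr
          exact card_siteBall_sub_le hR
      _ ≤ (R + √d) ^ 2 * (ballVol d * d * √d * (R + √d) ^ (d - 1)) := by
          gcongr
          linarith
      _ = d * ballVol d * √d * (R + √d) ^ (d + 1) := by
          rw [pow_succ _ d, ← pow_sub_one_mul (NeZero.ne d) (R + √d)]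
          ring
  rw [psi_sub_psi_siteBall A hR, hA]
  linarith

end SymmDiff

/-- The radius of the Euclidean ball of unit volume in `ℝ^d`, as in `unitVolBall`. -/
def unitRadius (d : ℕ) : ℝ := ballVol d ^ (-(1 : ℝ) / (d : ℝ))

lemma unitRadius_pos (d : ℕ) : 0 < unitRadius d := Real.rpow_pos_of_pos (ballVol_pos d) _

lemma ballVol_mul_unitRadius_mul_pow {d : ℕ} [NeZero d] (q : ℝ) :
    ballVol d * (unitRadius d * q) ^ d = q ^ d := by
  have hω := ballVol_pos d
  have hd : (d : ℝ) ≠ 0 := NeZero.ne _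
  have hpow : unitRadius d ^ d = (ballVol d)⁻¹ := by
    rw [unitRadius, ← Real.rpow_mul_natCast hω.le, div_mul_cancel₀ _ hd, Real.rpow_neg_one]
  rw [mul_pow, hpow, mul_inv_cancel_left₀ hω.ne']

lemma lball_eq_siteBall {d n : ℕ} [NeZero d] {q : ℝ} (hq : 0 ≤ q) (hqn : q ^ d = n) :
    lball d n = siteBall d (unitRadius d * q) := by
  ext x
  rw [Finset.mem_coe, mem_siteBall, lball, Set.mem_ofPred_eq, ← hqn,
    ← ballVol_mul_unitRadius_mul_pow q, mul_lt_mul_iff_right₀ (ballVol_pos d),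
    pow_lt_pow_iff_left₀ (enorm_nonneg x) (mul_nonneg (unitRadius_pos d).le hq) (NeZero.ne d)]

theorem exists_psi_sub_psi_siteBall_ge (d : ℕ) [NeZero d] :
    ∃ c C : ℝ, 0 < c ∧ 0 < C ∧ ∀ q : ℝ, 1 ≤ q → ∀ A : Finset (Site d), A.card = q ^ d →
      c * (A ∆ siteBall d (unitRadius d * q)).card ^ 2 * (q ^ 2 / q ^ d) - C * (q ^ d * q)
        ≤ psi (A : Set (Site d)) - psi (siteBall d (unitRadius d * q) : Set (Site d)) := by
  have hω := ballVol_pos d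
  have hr := unitRadius_pos d
  have hd : (0 : ℝ) < d := mod_cast NeZero.pos d
  set r := unitRadius d
  refine ⟨r / (4 * (ballVol d * d * 2 ^ d * (r + √d) ^ (d - 1))),
    (d + 1) * ballVol d * √d * (r + √d) ^ (d + 1), by positivity, by positivity, ?_⟩
  intro q hq A hA
  have hq0 : 0 < q := by positivity
  have hle : r * q + √d ≤ (r + √d) * q := by
    linarith [le_mul_of_one_le_right (Real.sqrt_nonneg (d : ℝ)) hq]
  refine le_trans (sub_le_sub ?_ ?_) (psi_sub_psi_siteBall_ge (mul_pos hr hq0).le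
    (hA.trans (ballVol_mul_unitRadius_mul_pow q).symm))
  · set s : ℝ := ((A ∆ siteBall d (r * q)).card : ℝ)
    calc r / (4 * (ballVol d * d * 2 ^ d * (r + √d) ^ (d - 1))) * s ^ 2 * (q ^ 2 / q ^ d)
        = r * q * (s ^ 2 / (4 * (ballVol d * d * 2 ^ d * ((r + √d) * q) ^ (d - 1)))) := by
          rw [mul_pow, ← pow_sub_one_mul (NeZero.ne d) q]
          field_simp
      _ ≤ r * q * (s ^ 2 / (4 * (ballVol d * d * 2 ^ d * (r * q + √d) ^ (d - 1)))) := by gcongr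
  · calc (d + 1) * ballVol d * √d * (r * q + √d) ^ (d + 1)
        ≤ (d + 1) * ballVol d * √d * ((r + √d) * q) ^ (d + 1) := by gcongr
      _ = (d + 1) * ballVol d * √d * (r + √d) ^ (d + 1) * (q ^ d * q) := by
          rw [mul_pow, pow_succ q]
          ring

theorem psi_symmDiff_lower (d : ℕ) (hd : 1 ≤ d) :
    ∃ c C : ℝ, 0 < c ∧ 0 < C ∧ ∀ n : ℕ, 1 ≤ n → ∀ A : Set (Site d), A.Finite → A.ncard = n →
      c * (((A ∆ lball d n).ncard : ℝ)) ^ 2 * (n : ℝ) ^ (-(1 : ℝ) + 2 / (d : ℝ))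
          - C * (n : ℝ) ^ (1 + 1 / (d : ℝ))
        ≤ psi A - psi (lball d n) := by
  have : NeZero d := ⟨by omega⟩
  obtain ⟨c, C, hc, hC, hball⟩ := exists_psi_sub_psi_siteBall_ge d
  refine ⟨c, C, hc, hC, fun n hn A hA hAn => ?_⟩
  lift A to Finset (Site d) using hA
  have hn0 : (0 : ℝ) < n := mod_cast hn
  set q : ℝ := (n : ℝ) ^ (1 / (d : ℝ)) with hq
  have hq1 : 1 ≤ q := Real.one_le_rpow (mod_cast hn) (by positivity)
  have hqd : q ^ d = n := by rw [hq, one_div, Real.rpow_inv_natCast_pow hn0.le (NeZero.ne d)]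
  have hmain : (n : ℝ) ^ (-(1 : ℝ) + 2 / (d : ℝ)) = q ^ 2 / q ^ d := by
    rw [hqd, hq, ← Real.rpow_mul_natCast hn0.le, Real.rpow_add hn0, Real.rpow_neg_one,
      Nat.cast_two, one_div_mul_eq_div, inv_mul_eq_div]
  have herror : (n : ℝ) ^ (1 + 1 / (d : ℝ)) = q ^ d * q := by
    rw [Real.rpow_add hn0, Real.rpow_one, hqd]
  rw [Set.ncard_coe_finset] at hAn
  rw [hmain, herror, lball_eq_siteBall (by positivity) hqd, ← Finset.coe_symmDiff,
    Set.ncard_coe_finset]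
  exact hball q hq1 A (by rw [hAn, hqd])

end RotorRouterPaper
end
end
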